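/- arXiv:0802.3200 — 6 statements merged into one kernel-verified Lean document; each statement's English description precedes it below -/
import Mathlib

section
/- Let q be a prime power, let F_q be the finite field with q elements, let b be a nonzero element of F_q, let n ≥ 1 be an integer, and set d = gcd(n+1, q−1). Then |N_{n+1}(0,b) − (q^n − 1)/(q−1)| ≤ (d−1)·q^{(n−1)/2}, where the bound is understood as a real-number inequality. -/
/-- The multiplicative character `χ ∘ Norm` of the extension field. -/
noncomputable def katzNormChar {F E : Type*} [Field F] [Field E] [Algebra F E]
    [FiniteDimensional F E] (χ : MulChar F ℂ) : MulChar E ℂ where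
  toMonoidHom := χ.toMonoidHom.comp (Algebra.norm F)
  map_nonunit' a ha := by
    have h0 : a = 0 := by simpa using ha
    subst h0
    show χ (Algebra.norm F (0 : E)) = 0
    rw [Algebra.norm_zero]
    exact χ.map_zero

theorem katzNormChar_apply {F E : Type*} [Field F] [Field E] [Algebra F E]
    [FiniteDimensional F E] (χ : MulChar F ℂ) (a : E) :
    katzNormChar χ a = χ (Algebra.norm F a) := rfl

theorem katz_norm_gaussSum {E : Type*} [Field E] [Fintype E] {χ : MulChar E ℂ} (hχ : χ ≠ 1)
    {ψ : AddChar E ℂ} (hψ : ψ.IsPrimitive) :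
    ‖gaussSum χ ψ‖ ^ 2 = Fintype.card E := by
  have h := gaussSum_mul_gaussSum_eq_card hχ hψ
  rw [← star_gaussSum_eq] at h
  have h2 := congrArg norm h
  rw [norm_mul, norm_star, Complex.norm_natCast] at h2
  rw [sq, h2]

theorem katz_orthogonality {F : Type*} [Field F] [Fintype F] [Fintype (MulChar F ℂ)]
    [DecidableEq F] (b a : F) (hb : b ≠ 0) :
    ∑ χ : MulChar F ℂ, χ b⁻¹ * χ a = if a = b then ((Fintype.card F : ℂ) - 1) else 0 := by
  simp only [← map_mul]
  split_ifs with h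
  · subst h
    rw [inv_mul_cancel₀ hb]
    simp only [map_one, Finset.sum_const, Finset.card_univ, nsmul_eq_mul, mul_one]
    rw [← Nat.card_eq_fintype_card, MulChar.card_eq_card_units_of_hasEnoughRootsOfUnity F ℂ,
      Nat.card_units, Nat.card_eq_fintype_card, Nat.cast_sub Fintype.card_pos, Nat.cast_one]
  · have hne : b⁻¹ * a ≠ 1 := by
      intro h'
      apply h
      field_simp at h'
      exact h'
    obtain ⟨χ, hχ⟩ := MulChar.exists_apply_ne_one_of_hasEnoughRootsOfUnity F ℂ hne
    refine eq_zero_of_mul_eq_self_left hχ ?_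
    simp only [Finset.mul_sum, ← MulChar.mul_apply]
    exact Fintype.sum_bijective _ (Group.mulLeft_bijective χ) _ _ fun χ' ↦ rfl

theorem katz_card_chars {F : Type*} [Field F] [Fintype F] [Fintype (MulChar F ℂ)]
    [DecidableEq (MulChar F ℂ)] (m : ℕ) :
    (Finset.univ.filter (fun χ : MulChar F ℂ => χ ^ m = 1)).card
      = Nat.gcd m (Fintype.card F - 1) := by
  have e := (MulChar.mulEquiv_units F ℂ).some
  haveI : IsCyclic (MulChar F ℂ) := isCyclic_of_surjective e.symm e.symm.surjective
  have h := IsCyclic.card_powMonoidHom_ker (G := MulChar F ℂ) m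
  rw [MulChar.card_eq_card_units_of_hasEnoughRootsOfUnity F ℂ, Nat.card_units,
    Nat.card_eq_fintype_card (α := F), Nat.gcd_comm] at h
  rw [← h, ← SetLike.coe_sort_coe, Nat.card_coe_set_eq, ← Set.ncard_coe_finset]
  congr 1
  ext χ
  simp [MonoidHom.mem_ker]

theorem katz_key {F E : Type*} [Field F] [Fintype F] [Field E] [Fintype E] [Algebra F E]
    [DecidableEq F]
    (m : ℕ) (hm : m ≠ 0) (hE : Module.finrank F E = m)
    {ψ : AddChar F ℂ} (hψ : ψ.IsPrimitive) (χ : MulChar F ℂ) :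
    (Fintype.card F : ℂ) * ∑ α ∈ Finset.univ.filter (fun α : E => Algebra.trace F E α = 0),
        χ (Algebra.norm F α)
      = ∑ α : E, katzNormChar χ α + (∑ t : F, (χ ^ m)⁻¹ t) *
        gaussSum (katzNormChar χ) (ψ.compAddMonoidHom (Algebra.trace F E).toAddMonoidHom) := by
  have h1 : (Fintype.card F : ℂ) * ∑ α ∈ Finset.univ.filter
      (fun α : E => Algebra.trace F E α = 0), χ (Algebra.norm F α)
      = ∑ t : F, ∑ α : E, katzNormChar χ α * ψ (t * Algebra.trace F E α) := by
    rw [Finset.sum_comm, Finset.mul_sum, Finset.sum_filter]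
    refine Finset.sum_congr rfl fun α _ => ?_
    rw [← Finset.mul_sum, AddChar.sum_mulShift _ hψ, katzNormChar_apply]
    split_ifs <;> simp [mul_comm]
  rw [h1, ← Finset.add_sum_erase _ _ (Finset.mem_univ (0 : F))]
  congr 1
  · simp
  · rw [← Finset.add_sum_erase _ (fun t => (χ ^ m)⁻¹ t) (Finset.mem_univ (0 : F))]
    rw [MulChar.map_zero, zero_add, Finset.sum_mul]
    refine Finset.sum_congr rfl fun t ht => ?_
    have ht0 : t ≠ 0 := by simpa using ht
    have hu : algebraMap F E t ≠ 0 := by simpa using ht0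
    have hg := gaussSum_mulShift_eq (katzNormChar χ)
      (ψ.compAddMonoidHom (Algebra.trace F E).toAddMonoidHom) (Units.mk0 _ hu)
    have hc : (katzNormChar χ : MulChar E ℂ)⁻¹ (Units.mk0 (algebraMap F E t) hu : Eˣ)
        = (χ ^ m)⁻¹ t := by
      rw [MulChar.inv_apply', MulChar.inv_apply', Units.val_mk0, katzNormChar_apply,
        ← map_inv₀, Algebra.norm_algebraMap, hE, map_pow, MulChar.pow_apply' _ hm]
    rw [← hc, ← hg, gaussSum]
    refine Finset.sum_congr rfl fun α _ => ?_
    rw [AddChar.mulShift_apply, Units.val_mk0, ← Algebra.smul_def]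
    simp

/-- For `b ∈ 𝔽_q^*`, `n ≥ 1` and `d = gcd(n+1, q−1)`,
`|N_{n+1}(0,b) − (q^n − 1)/(q−1)| ≤ (d−1)·q^{(n−1)/2}`. -/
theorem katz_bound_trace_zero (q n : ℕ) (hn : 1 ≤ n)
    (F E : Type*) [Field F] [Fintype F] [Field E] [Fintype E] [Algebra F E]
    (hq : Fintype.card F = q) (hE : Module.finrank F E = n + 1)
    (b : F) (hb : b ≠ 0) (d : ℕ) (hd : d = Nat.gcd (n + 1) (q - 1)) :
    |(Nat.card {α : E // Algebra.trace F E α = 0 ∧ Algebra.norm F α = b} : ℝ)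
        - ((q : ℝ) ^ n - 1) / ((q : ℝ) - 1)|
      ≤ ((d : ℝ) - 1) * (q : ℝ) ^ (((n : ℝ) - 1) / 2) := by
  classical
  letI : Fintype (MulChar F ℂ) := Fintype.ofFinite _
  have hq1 : 1 < q := hq ▸ Fintype.one_lt_card
  have hq1R : (1 : ℝ) < q := by exact_mod_cast hq1
  have hq0C : (q : ℂ) ≠ 0 := by exact_mod_cast (by omega : q ≠ 0)
  have hcE : Fintype.card E = q ^ (n + 1) := by
    rw [Module.card_eq_pow_finrank (K := F), hE, hq]
  obtain ⟨ψ0, hψ0⟩ := (AddChar.exists_apply_ne_zero (α := F) (a := 1)).2 one_ne_zero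
  have hψ : ψ0.IsPrimitive := AddChar.IsPrimitive.of_ne_one
    (AddChar.ne_one_iff.2 ⟨1, hψ0⟩)
  set ψE : AddChar E ℂ := ψ0.compAddMonoidHom (Algebra.trace F E).toAddMonoidHom with hψEdef
  have hψE1 : ψE ≠ 1 := by
    obtain ⟨a, ha⟩ := Algebra.trace_surjective F E 1
    refine AddChar.ne_one_iff.2 ⟨a, ?_⟩
    simpa [hψEdef, ha] using hψ0
  have hψE : ψE.IsPrimitive := AddChar.IsPrimitive.of_ne_one hψE1
  set S : MulChar F ℂ → ℂ := fun χ =>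
    ∑ α ∈ Finset.univ.filter (fun α : E => Algebra.trace F E α = 0), χ (Algebra.norm F α) with hS
  have key : ∀ χ : MulChar F ℂ, (q : ℂ) * S χ = ∑ α : E, katzNormChar χ α +
      (∑ t : F, (χ ^ (n + 1))⁻¹ t) * gaussSum (katzNormChar χ) ψE := by
    intro χ
    rw [← hq]
    exact katz_key (n + 1) (by omega) hE hψ χ
  have hnc1 : (katzNormChar (1 : MulChar F ℂ) : MulChar E ℂ) = 1 := by
    refine MulChar.ext fun a => ?_
    rw [katzNormChar_apply, MulChar.one_apply_coe, MulChar.one_apply]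
    exact (a.isUnit).map _
  have hncne : ∀ χ : MulChar F ℂ, χ ≠ 1 → (katzNormChar χ : MulChar E ℂ) ≠ 1 := by
    intro χ hχ h
    apply hχ
    refine MulChar.ext fun a => ?_
    obtain ⟨x, hx⟩ := FiniteField.unitsMap_norm_surjective F E a
    have h2 := congrArg (fun c : MulChar E ℂ => c x) h
    simp only [katzNormChar_apply, MulChar.one_apply_coe] at h2
    rw [MulChar.one_apply_coe, ← hx]
    exact h2
  have hsum1F : (∑ t : F, (1 : MulChar F ℂ) t) = (q : ℂ) - 1 := by
    rw [MulChar.sum_one_eq_card_units, Fintype.card_units, hq, Nat.cast_sub hq1.le, Nat.cast_one]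
  have hsum1E : (∑ t : E, (1 : MulChar E ℂ) t) = (q : ℂ) ^ (n + 1) - 1 := by
    rw [MulChar.sum_one_eq_card_units, Fintype.card_units, hcE,
      Nat.cast_sub (Nat.one_le_pow _ _ (by omega)), Nat.cast_one, Nat.cast_pow]
  have hS1 : S 1 = (q : ℂ) ^ n - 1 := by
    have h := key 1
    rw [hnc1, hsum1E, one_pow, inv_one, hsum1F, gaussSum_one_left hψE1] at h
    apply mul_left_cancel₀ hq0C
    rw [h]
    ring
  have hS0 : ∀ χ : MulChar F ℂ, χ ≠ 1 → χ ^ (n + 1) ≠ 1 → S χ = 0 := by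
    intro χ hχ hχm
    have h := key χ
    rw [MulChar.sum_eq_zero_of_ne_one (hncne χ hχ),
      MulChar.sum_eq_zero_of_ne_one (inv_ne_one.2 hχm)] at h
    simpa [hq0C] using h
  set B : ℝ := (q : ℝ) ^ (((n : ℝ) - 1) / 2) with hB
  have hSb : ∀ χ : MulChar F ℂ, χ ≠ 1 → χ ^ (n + 1) = 1 → ‖S χ‖ = (q - 1) * B := by
    intro χ hχ hχm
    have h := key χ
    rw [MulChar.sum_eq_zero_of_ne_one (hncne χ hχ), hχm, inv_one, hsum1F, zero_add] at h
    have h2 := congrArg norm h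
    rw [norm_mul, norm_mul, Complex.norm_natCast] at h2
    have h3 : ‖(q : ℂ) - 1‖ = (q : ℝ) - 1 := by
      rw [show (q : ℂ) - 1 = (((q : ℝ) - 1 : ℝ) : ℂ) by push_cast; rfl, Complex.norm_real,
        Real.norm_of_nonneg (by linarith)]
    have hG : ‖gaussSum (katzNormChar χ) ψE‖ = q * B := by
      have h4 := katz_norm_gaussSum (hncne χ hχ) hψE
      have hB0 : 0 ≤ (q : ℝ) * B := by positivity
      rw [← sq_eq_sq₀ (norm_nonneg _) hB0, h4, hcE, mul_pow, hB, ← Real.rpow_natCast (_ ^ _) 2,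
        ← Real.rpow_mul (by positivity), ← Real.rpow_natCast (q : ℝ) 2,
        ← Real.rpow_add (by positivity), Nat.cast_pow, ← Real.rpow_natCast]
      congr 1
      push_cast
      ring
    rw [h3, hG] at h2
    have hq0R : (q : ℝ) ≠ 0 := by positivity
    apply mul_left_cancel₀ hq0R
    rw [h2]
    ring
  set N := Nat.card {α : E // Algebra.trace F E α = 0 ∧ Algebra.norm F α = b} with hN
  have hNS : ((q : ℂ) - 1) * N = ∑ χ : MulChar F ℂ, χ b⁻¹ * S χ := by
    simp only [hS, Finset.mul_sum]
    rw [Finset.sum_comm]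
    simp only [katz_orthogonality b _ hb, hq]
    rw [← Finset.sum_filter, Finset.filter_filter, Finset.sum_const, nsmul_eq_mul, mul_comm, hN,
      Nat.card_eq_fintype_card, Fintype.card_subtype]
  have hdiff : ((q : ℂ) - 1) * N - (q ^ n - 1)
      = ∑ χ ∈ (Finset.univ.filter (fun χ : MulChar F ℂ => χ ^ (n + 1) = 1)).erase 1,
        χ b⁻¹ * S χ := by
    rw [hNS, ← Finset.add_sum_erase _ _ (Finset.mem_univ (1 : MulChar F ℂ)), hS1,
      MulChar.one_apply (isUnit_iff_ne_zero.2 (inv_ne_zero hb)), one_mul, add_sub_cancel_left]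
    symm
    apply Finset.sum_subset
    · exact Finset.erase_subset_erase _ (Finset.subset_univ _)
    · intro χ h1 h2
      have hχ : χ ≠ 1 := Finset.ne_of_mem_erase h1
      have : χ ^ (n + 1) ≠ 1 := by
        intro h
        exact h2 (by simp [hχ, h])
      rw [hS0 χ hχ this, mul_zero]
  have hcard : (((Finset.univ.filter (fun χ : MulChar F ℂ => χ ^ (n + 1) = 1)).erase 1).card : ℝ)
      = (d : ℝ) - 1 := by
    have h1 : (1 : MulChar F ℂ) ∈
        Finset.univ.filter (fun χ : MulChar F ℂ => χ ^ (n + 1) = 1) := by simp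
    rw [Finset.cast_card_erase_of_mem h1, katz_card_chars, hq, hd]
  have hbound : ‖((q : ℂ) - 1) * N - (q ^ n - 1)‖ ≤ ((d : ℝ) - 1) * ((q - 1) * B) := by
    rw [hdiff, ← hcard, ← nsmul_eq_mul]
    apply Finset.sum_le_card_nsmul _ _ _ _ |> (norm_sum_le _ _).trans
    intro χ hχ
    rw [Finset.mem_erase, Finset.mem_filter] at hχ
    rw [norm_mul, hSb χ hχ.1 hχ.2.2]
    have : ‖χ b⁻¹‖ = 1 := by
      have h := MulChar.star_apply' χ b⁻¹
      rw [MulChar.inv_apply', inv_inv] at h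
      have h5 : star (χ b⁻¹) * χ b⁻¹ = 1 := by
        rw [h, ← map_mul, mul_inv_cancel₀ hb, map_one]
      have h6 := congrArg norm h5
      rw [norm_mul, norm_star, norm_one] at h6
      nlinarith [norm_nonneg (χ b⁻¹)]
    rw [this, one_mul]
  have hreal : ‖((q : ℂ) - 1) * N - (q ^ n - 1)‖ = |((q : ℝ) - 1) * N - (q ^ n - 1)| := by
    rw [← Real.norm_eq_abs, ← Complex.norm_real]
    push_cast
    rfl
  rw [hreal] at hbound
  have hpos : (0 : ℝ) < (q : ℝ) - 1 := by linarith
  have heq : ((q : ℝ) - 1) * N - (q ^ n - 1)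
      = (q - 1) * ((N : ℝ) - ((q : ℝ) ^ n - 1) / ((q : ℝ) - 1)) := by
    field_simp
  rw [heq, abs_mul, abs_of_pos hpos] at hbound
  refine le_of_mul_le_mul_left ?_ hpos
  linarith
end

section
/- Let q be a prime power, let F_q be the finite field with q elements, let a, b be nonzero elements of F_q, let n ≥ 1 be an integer, and set u = b/a^{n+1}. Then N_{n+1}(a,b) = (q^n − 1)/(q−1) + (−1)^n · ( N(u) − ((q−1)^n − (−1)^n)/q ), an identity of rational numbers. -/
namespace TN

open Polynomial

noncomputable section

variable {F : Type*} [Field F] [Fintype F]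

theorem finite_monic (d : ℕ) : {f : F[X] | f.Monic ∧ f.natDegree = d}.Finite := by
  classical
  apply Set.Finite.subset (Set.finite_range
    (fun c : Fin (d+1) → F => ∑ i : Fin (d+1), C (c i) * X ^ (i : ℕ)))
  rintro f ⟨_, hf⟩
  refine ⟨fun i => f.coeff i, ?_⟩
  simp only
  rw [Fin.sum_univ_eq_sum_range (fun i => C (f.coeff i) * X ^ i) (d+1), ← hf]
  exact (f.as_sum_range_C_mul_X_pow).symm

def Mon (F : Type*) [Field F] [Fintype F] (d : ℕ) : Finset F[X] := (finite_monic (F := F) d).toFinset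

theorem mem_Mon {d : ℕ} {f : F[X]} : f ∈ Mon F d ↔ f.Monic ∧ f.natDegree = d := by
  simp [Mon]

open Classical in
def Irr (F : Type*) [Field F] [Fintype F] (d : ℕ) : Finset F[X] := (Mon F d).filter Irreducible

theorem mem_Irr {d : ℕ} {f : F[X]} : f ∈ Irr F d ↔ f.Monic ∧ f.natDegree = d ∧ Irreducible f := by
  simp [Irr, mem_Mon, and_assoc]

open Classical in
theorem degree_count (m : ℕ) (f : F[X]) (hf : f ∈ Mon F m) :
    m = ∑ d ∈ Finset.Icc 1 m, ∑ P ∈ Irr F d, ∑ j ∈ Finset.Icc 1 m, if P ^ j ∣ f then d else 0 := by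
  rw [mem_Mon] at hf
  obtain ⟨hm, hd⟩ := hf
  have h0 : f ≠ 0 := hm.ne_zero
  have h1 : m = ((UniqueFactorizationMonoid.normalizedFactors f).map natDegree).sum := by
    have h2 := UniqueFactorizationMonoid.prod_normalizedFactors_eq h0
    rw [hm.normalize_eq_self] at h2
    rw [← hd]
    conv_lhs => rw [← h2]
    apply natDegree_multiset_prod
    exact UniqueFactorizationMonoid.zero_notMem_normalizedFactors f
  have hfin : ∀ d, ∀ P ∈ Irr F d, (∑ j ∈ Finset.Icc 1 m, if P ^ j ∣ f then d else 0)
      = (UniqueFactorizationMonoid.normalizedFactors f).count P * d := by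
    intro d P hP
    rw [mem_Irr] at hP
    obtain ⟨hPm, hPd, hPi⟩ := hP
    rw [← Finset.sum_filter, Finset.sum_const, smul_eq_mul]
    congr 1
    have : ∀ j, P ^ j ∣ f ↔ j ≤ (UniqueFactorizationMonoid.normalizedFactors f).count P := by
      intro j
      have := UniqueFactorizationMonoid.emultiplicity_eq_count_normalizedFactors hPi h0
      rw [hPm.normalize_eq_self] at this
      rw [pow_dvd_iff_le_emultiplicity, this]
      simp
    have hle : (UniqueFactorizationMonoid.normalizedFactors f).count P ≤ m := by
      have h3 := (this _).2 le_rfl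
      have h4 := natDegree_le_of_dvd h3 h0
      rw [natDegree_pow] at h4
      have := hPi.natDegree_pos
      nlinarith
    have : (Finset.Icc 1 m).filter (fun j => P ^ j ∣ f) = 
        Finset.Icc 1 ((UniqueFactorizationMonoid.normalizedFactors f).count P) := by
      ext j
      simp only [Finset.mem_filter, Finset.mem_Icc, this]
      omega
    rw [this]; simp
  rw [Finset.sum_congr rfl (fun d _ => Finset.sum_congr rfl (hfin d))]
  rw [Finset.sum_multiset_map_count] at h1
  rw [Finset.sum_sigma']
  conv_lhs => rw [h1]
  symm
  refine Finset.sum_bij_ne_zero (fun x _ _ => x.2) ?_ ?_ ?_ ?_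
  · rintro ⟨d, P⟩ h h'
    simp only [Multiset.mem_toFinset]
    by_contra hc
    apply h'
    simp [Multiset.count_eq_zero_of_notMem hc]
  · rintro ⟨d, P⟩ h h' ⟨d2, P2⟩ h2 h2' heq
    simp only [Finset.mem_sigma, mem_Irr] at *
    subst heq
    obtain rfl : d = d2 := by rw [← h.2.2.1, h2.2.2.1]
    rfl
  · intro P hP hne
    rw [Multiset.mem_toFinset] at hP
    have hir := UniqueFactorizationMonoid.irreducible_of_normalized_factor P hP
    have hmo : P.Monic := by
      have := UniqueFactorizationMonoid.normalize_normalized_factor P hP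
      rw [← this]; exact monic_normalize hir.ne_zero
    have hdv := UniqueFactorizationMonoid.dvd_of_mem_normalizedFactors hP
    refine ⟨⟨P.natDegree, P⟩, ?_, ?_, rfl⟩
    · simp only [Finset.mem_sigma, mem_Irr, Finset.mem_Icc]
      refine ⟨⟨hir.natDegree_pos, ?_⟩, hmo, trivial, hir⟩
      rw [← hd]; exact natDegree_le_of_dvd hdv h0
    · simpa using hne
  · rintro ⟨d, P⟩ h h'
    simp only [Finset.mem_sigma, mem_Irr] at *
    rw [h.2.2.1]; simp

section
variable {R : Type*} [CommRing R] (l : F[X] → R)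

def hh (d : ℕ) : R := ∑ f ∈ Mon F d, l f

def NN (k : ℕ) : R := ∑ p ∈ k.divisorsAntidiagonal, ∑ P ∈ Irr F p.1, (p.1 : R) * l P ^ p.2

theorem l_pow (hl1 : l 1 = 1)
    (hl : ∀ f g : F[X], f.Monic → g.Monic → l (f * g) = l f * l g)
    (P : F[X]) (hP : P.Monic) (j : ℕ) : l (P ^ j) = l P ^ j := by
  induction j with
  | zero => simpa using hl1
  | succ j ih => rw [pow_succ, hl _ _ (hP.pow j) hP, ih, pow_succ]

open Classical in
theorem sum_multiples (hl1 : l 1 = 1)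
    (hl : ∀ f g : F[X], f.Monic → g.Monic → l (f * g) = l f * l g)
    (m d j : ℕ) (P : F[X]) (hP : P ∈ Irr F d) :
    (∑ f ∈ Mon F m, if P ^ j ∣ f then l f else 0) =
      if d * j ≤ m then l P ^ j * hh l (m - d * j) else 0 := by
  rw [mem_Irr] at hP
  obtain ⟨hPm, hPd, hPi⟩ := hP
  have hPj : (P ^ j).Monic := hPm.pow j
  have hdeg : (P ^ j).natDegree = d * j := by rw [natDegree_pow, hPd, mul_comm]
  split_ifs with h
  · rw [← Finset.sum_filter, hh, Finset.mul_sum]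
    symm
    refine Finset.sum_bij (fun g _ => P ^ j * g) ?_ ?_ ?_ ?_
    · intro g hg
      rw [mem_Mon] at hg
      rw [Finset.mem_filter, mem_Mon]
      refine ⟨⟨hPj.mul hg.1, ?_⟩, dvd_mul_right _ _⟩
      rw [hPj.natDegree_mul hg.1, hdeg, hg.2]; omega
    · intro g _ g' _ h
      exact mul_left_cancel₀ hPj.ne_zero h
    · intro f hf
      rw [Finset.mem_filter, mem_Mon] at hf
      obtain ⟨⟨hf1, hf2⟩, g, rfl⟩ := hf
      have hg := hPj.of_mul_monic_left hf1
      refine ⟨g, ?_, rfl⟩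
      rw [mem_Mon]
      refine ⟨hg, ?_⟩
      rw [hPj.natDegree_mul hg, hdeg] at hf2
      omega
    · intro g hg
      rw [mem_Mon] at hg
      rw [hl _ _ hPj hg.1, l_pow l hl1 hl P hPm]
  · apply Finset.sum_eq_zero
    intro f hf
    rw [mem_Mon] at hf
    rw [if_neg]
    intro hd
    have := natDegree_le_of_dvd hd hf.1.ne_zero
    omega

theorem newton (hl1 : l 1 = 1)
    (hl : ∀ f g : F[X], f.Monic → g.Monic → l (f * g) = l f * l g)
    (m : ℕ) : (m : R) * hh l m = ∑ k ∈ Finset.Icc 1 m, NN l k * hh l (m - k) := by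
  classical
  have h1 : (m : R) * hh l m = ∑ d ∈ Finset.Icc 1 m, ∑ j ∈ Finset.Icc 1 m, ∑ P ∈ Irr F d,
      (d : R) * if d * j ≤ m then l P ^ j * hh l (m - d * j) else 0 := by
    calc (m : R) * hh l m = ∑ f ∈ Mon F m, (m : R) * l f := by rw [hh, Finset.mul_sum]
      _ = ∑ f ∈ Mon F m, ∑ d ∈ Finset.Icc 1 m, ∑ j ∈ Finset.Icc 1 m, ∑ P ∈ Irr F d,
            (d : R) * (if P ^ j ∣ f then l f else 0) := by
        apply Finset.sum_congr rfl
        intro f hf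
        have := congrArg (Nat.cast : ℕ → R) (degree_count m f hf)
        conv_lhs => rw [this]
        push_cast
        rw [Finset.sum_mul]
        apply Finset.sum_congr rfl
        intro d _
        rw [Finset.sum_comm, Finset.sum_mul]
        apply Finset.sum_congr rfl
        intro j _
        rw [Finset.sum_mul]
        apply Finset.sum_congr rfl
        intro P _
        split_ifs <;> simp
      _ = _ := by
        rw [Finset.sum_comm]
        apply Finset.sum_congr rfl
        intro d _
        rw [Finset.sum_comm]
        apply Finset.sum_congr rfl
        intro j _
        rw [Finset.sum_comm]
        apply Finset.sum_congr rfl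
        intro P hP
        rw [← Finset.mul_sum, sum_multiples l hl1 hl m d j P hP]
  rw [h1, ← Finset.sum_product']
  simp only [NN, Finset.sum_mul]
  rw [Finset.sum_sigma' (Finset.Icc 1 m) (fun k => k.divisorsAntidiagonal)]
  rw [← Finset.sum_filter_of_ne (s := Finset.Icc 1 m ×ˢ Finset.Icc 1 m)
    (p := fun x : ℕ × ℕ => x.1 * x.2 ≤ m)]
  symm
  · refine Finset.sum_bij (fun x _ => x.2) ?_ ?_ ?_ ?_
    · rintro ⟨k, d, j⟩ h
      simp only [Finset.mem_sigma, Finset.mem_Icc, Nat.mem_divisorsAntidiagonal, Finset.mem_filter,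
        Finset.mem_product] at *
      obtain ⟨⟨h1, h2⟩, h3, h4⟩ := h
      have hd : 1 ≤ d := Nat.pos_of_ne_zero (by rintro rfl; simp at h3; omega)
      have hj : 1 ≤ j := Nat.pos_of_ne_zero (by rintro rfl; simp at h3; omega)
      refine ⟨⟨⟨hd, ?_⟩, hj, ?_⟩, ?_⟩ <;> nlinarith
    · rintro ⟨k, d, j⟩ h ⟨k', d', j'⟩ h' heq
      simp only [Finset.mem_sigma, Nat.mem_divisorsAntidiagonal] at h h' heq
      cases heq
      obtain rfl : k = k' := by rw [← h.2.1, ← h'.2.1]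
      rfl
    · rintro ⟨d, j⟩ h
      simp only [Finset.mem_Icc, Finset.mem_filter, Finset.mem_product] at h
      refine ⟨⟨d * j, d, j⟩, ?_, rfl⟩
      simp only [Finset.mem_sigma, Finset.mem_Icc, Nat.mem_divisorsAntidiagonal]
      have : 1 ≤ d * j := Nat.mul_pos h.1.1.1 h.1.2.1
      refine ⟨⟨this, h.2⟩, trivial, by omega⟩
    · rintro ⟨k, d, j⟩ h
      simp only [Finset.mem_sigma, Finset.mem_Icc, Nat.mem_divisorsAntidiagonal] at h
      apply Finset.sum_congr rfl
      intro P _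
      simp only
      rw [h.2.1, if_pos h.1.2, mul_assoc]
  · rintro ⟨d, j⟩ _ hne
    by_contra hc
    apply hne
    simp [hc]

/-- Hasse-Davenport, abstract form modulo an ideal. -/
theorem hd_mod (hl1 : l 1 = 1)
    (hl : ∀ f g : F[X], f.Monic → g.Monic → l (f * g) = l f * l g)
    (I : Ideal R) (hI : ∀ d, 2 ≤ d → hh l d ∈ I) (n : ℕ) :
    NN l (n + 1) - (-1) ^ n * hh l 1 ^ (n + 1) ∈ I := by
  have h0 : hh l 0 = 1 := by
    rw [hh, Finset.sum_eq_single 1]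
    · exact hl1
    · intro f hf hne
      rw [mem_Mon] at hf
      exact absurd (hf.1.natDegree_eq_zero.1 hf.2) hne
    · intro h
      exact absurd (mem_Mon.2 ⟨monic_one, natDegree_one⟩) h
  have hn1 : NN l 1 = hh l 1 := by
    have := newton l hl1 hl 1
    simp [h0] at this
    exact this.symm
  induction n with
  | zero => simp [hn1]
  | succ n ih =>
    have hm := newton l hl1 hl (n + 2)
    rw [Finset.sum_Icc_succ_top (by omega), Finset.sum_Icc_succ_top (by omega)] at hm
    have e1 : n + 1 + 1 - (n + 1) = 1 := by omega
    simp only [Nat.sub_self, h0, mul_one, e1] at hm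
    have hA : (((n + 2 : ℕ) : R)) * hh l (n+2) ∈ I := I.mul_mem_left _ (hI _ (by omega))
    have hB : ∑ k ∈ Finset.Icc 1 n, NN l k * hh l (n + 2 - k) ∈ I := by
      apply I.sum_mem
      intro k hk
      rw [Finset.mem_Icc] at hk
      exact I.mul_mem_left _ (hI _ (by omega))
    have hC := I.mul_mem_left (hh l 1) ih
    have : NN l (n + 1 + 1) - (-1) ^ (n + 1) * hh l 1 ^ (n + 1 + 1) =
        (((n + 2 : ℕ) : R)) * hh l (n+2) - ∑ k ∈ Finset.Icc 1 n, NN l k * hh l (n + 2 - k)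
        - hh l 1 * (NN l (n + 1) - (-1) ^ n * hh l 1 ^ (n + 1)) := by
      rw [hm]; ring
    rw [this]
    exact I.sub_mem (I.sub_mem hA hB) hC
end

abbrev G (F : Type*) := Multiplicative F × F

def gam (f : F[X]) : G F := (Multiplicative.ofAdd (-f.nextCoeff), (-1) ^ f.natDegree * f.coeff 0)

def lam (f : F[X]) : MonoidAlgebra ℚ (G F) := MonoidAlgebra.single (gam f) 1

theorem gam_one : gam (1 : F[X]) = 1 := by
  have : (1 : F[X]).nextCoeff = 0 := by simp [nextCoeff]
  simp [gam, this]

theorem gam_mul (f g : F[X]) (hf : f.Monic) (hg : g.Monic) : gam (f * g) = gam f * gam g := by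
  unfold gam
  rw [hf.nextCoeff_mul hg, hf.natDegree_mul hg, mul_coeff_zero, Prod.mk_mul_mk, ← ofAdd_add]
  refine Prod.ext ?_ ?_
  · exact congrArg Multiplicative.ofAdd (by ring)
  · simp only; ring

theorem lam_one : lam (1 : F[X]) = 1 := by
  rw [lam, gam_one]; rfl

theorem lam_mul (f g : F[X]) (hf : f.Monic) (hg : g.Monic) : lam (f * g) = lam f * lam g := by
  simp [lam, gam_mul f g hf hg]

def II (F : Type*) [Field F] : Ideal (MonoidAlgebra ℚ (G F)) where
  carrier := {x | ∀ (s : Multiplicative F) (p : F) (s' : Multiplicative F) (p' : F),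
    p ≠ 0 → p' ≠ 0 → x.coeff (s, p) = x.coeff (s', p')}
  add_mem' := by
    intro x y hx hy s p s' p' hp hp'
    simp [hx s p s' p' hp hp', hy s p s' p' hp hp']
  zero_mem' := by
    intro s p s' p' hp hp'
    simp
  smul_mem' := by
    intro c x hx
    induction c using MonoidAlgebra.induction_on with
    | of g =>
      obtain ⟨t, r⟩ := g
      rw [smul_eq_mul, MonoidAlgebra.of_apply]
      by_cases hr : r = 0
      · subst hr
        have : ∀ s p, p ≠ 0 → (MonoidAlgebra.single (t, (0 : F)) (1 : ℚ) * x).coeff (s, p) = 0 := by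
          intro s p hp
          apply MonoidAlgebra.coeff_single_mul_of_forall_mul_ne
          rintro ⟨d1, d2⟩ h
          simp only [Prod.mk_mul_mk, zero_mul, Prod.mk.injEq] at h
          exact hp h.2.symm
        intro s p s' p' hp hp'
        rw [this s p hp, this s' p' hp']
      · have : ∀ s p, (MonoidAlgebra.single (t, r) (1 : ℚ) * x).coeff (s, p)
            = x.coeff (t⁻¹ * s, r⁻¹ * p) := by
          intro s p
          rw [MonoidAlgebra.coeff_single_mul_eq_mul_coeff (t⁻¹ * s, r⁻¹ * p), one_mul]
          rintro ⟨d1, d2⟩ _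
          simp only [Prod.mk_mul_mk, Prod.mk.injEq]
          rw [eq_inv_mul_iff_mul_eq, eq_inv_mul_iff_mul_eq₀ hr]
        intro s p s' p' hp hp'
        rw [this s p, this s' p']
        exact hx _ _ _ _ (by simp [hr, hp]) (by simp [hr, hp'])
    | add a b ha hb =>
      intro s p s' p' hp hp'
      have h1 := ha s p s' p' hp hp'
      have h2 := hb s p s' p' hp hp'
      rw [add_smul]
      simp only [MonoidAlgebra.coeff_add, Finsupp.add_apply, h1, h2]
    | smul r a ha =>
      intro s p s' p' hp hp'
      have h1 := ha s p s' p' hp hp'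
      rw [smul_assoc]
      simp only [MonoidAlgebra.coeff_smul, Finsupp.smul_apply, h1]

open Classical in
theorem coeff_sum_single {ι : Type*} (t : Finset ι) (g : ι → G F) (z : G F) :
    (∑ i ∈ t, MonoidAlgebra.single (g i) (1 : ℚ)).coeff z = ∑ i ∈ t, if g i = z then 1 else 0 := by
  rw [MonoidAlgebra.coeff_sum, Finsupp.finsetSum_apply]
  apply Finset.sum_congr rfl
  intro i _
  simp [Finsupp.single_apply]

theorem shift_mem (d : ℕ) (hd : 2 ≤ d) (x y : F) (f : F[X]) (hf : f ∈ Mon F d) :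
    f + (C x * X ^ (d - 1) + C y) ∈ Mon F d ∧
    (f + (C x * X ^ (d - 1) + C y)).nextCoeff = f.nextCoeff + x ∧
    (f + (C x * X ^ (d - 1) + C y)).coeff 0 = f.coeff 0 + y := by
  rw [mem_Mon] at *
  obtain ⟨hm, hn⟩ := hf
  have hlt : (C x * X ^ (d - 1) + C y).degree < f.degree := by
    rw [degree_eq_natDegree hm.ne_zero, hn]
    refine lt_of_le_of_lt (degree_add_le _ _) (max_lt ?_ ?_)
    · refine lt_of_le_of_lt (degree_C_mul_X_pow_le _ _) ?_
      exact_mod_cast (by omega : d - 1 < d)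
    · refine lt_of_le_of_lt degree_C_le ?_
      exact_mod_cast (by omega : 0 < d)
  have hdeg : (f + (C x * X ^ (d - 1) + C y)).natDegree = d := by
    rw [natDegree_add_eq_left_of_degree_lt hlt, hn]
  refine ⟨⟨hm.add_of_left hlt, hdeg⟩, ?_, ?_⟩
  · rw [nextCoeff_of_natDegree_pos (by omega), nextCoeff_of_natDegree_pos (by omega), hdeg, hn]
    have : d - 1 ≠ 0 := by omega
    simp [coeff_C, this]
  · have : (0 : ℕ) ≠ d - 1 := by omega
    simp only [coeff_add, coeff_C_mul, coeff_X_pow, coeff_C_zero, if_neg this]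
    ring

theorem hh_mem (d : ℕ) (hd : 2 ≤ d) : hh (lam (F := F)) d ∈ II F := by
  classical
  intro s p s' p' _ _
  unfold hh lam
  rw [coeff_sum_single, coeff_sum_single]
  set x : F := s.toAdd - s'.toAdd with hx
  set y : F := (-1) ^ d * (p' - p) with hy
  have key : ∀ f ∈ Mon F d, (gam f = (s, p) ↔ gam (f + (C x * X ^ (d - 1) + C y)) = (s', p')) := by
    intro f hf
    obtain ⟨h1, h2, h3⟩ := shift_mem d hd x y f hf
    rw [mem_Mon] at h1 hf
    unfold gam
    rw [h2, h3, h1.2, hf.2, Prod.mk.injEq, Prod.mk.injEq]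
    apply and_congr
    · rw [← Multiplicative.toAdd.apply_eq_iff_eq, ← Multiplicative.toAdd.apply_eq_iff_eq, toAdd_ofAdd,
        toAdd_ofAdd, hx]
      constructor <;> intro h <;> linear_combination h
    · have : ((-1 : F) ^ d) * (-1) ^ d = 1 := by rw [← mul_pow]; simp
      rw [hy]
      constructor <;> intro h
      · linear_combination h + (p' - p) * this
      · linear_combination h - (p' - p) * this
  refine Finset.sum_nbij' (fun f => f + (C x * X ^ (d - 1) + C y))
    (fun f => f + (C (-x) * X ^ (d - 1) + C (-y))) ?_ ?_ ?_ ?_ ?_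
  · intro f hf; exact (shift_mem d hd x y f hf).1
  · intro f hf; exact (shift_mem d hd _ _ f hf).1
  · intro f hf; simp only [C_neg]; ring
  · intro f hf; simp only [C_neg]; ring
  · intro f hf; simp only [key f hf]

theorem hh_one : hh (lam (F := F)) 1 =
    ∑ x : F, MonoidAlgebra.single ((Multiplicative.ofAdd x, x) : G F) (1 : ℚ) := by
  symm
  refine Finset.sum_bij (fun x _ => X - C x) ?_ ?_ ?_ ?_
  · intro x _
    rw [mem_Mon]; exact ⟨monic_X_sub_C x, natDegree_X_sub_C x⟩
  · intro x _ y _ h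
    simpa using h
  · intro f hf
    rw [mem_Mon] at hf
    refine ⟨-f.coeff 0, Finset.mem_univ _, ?_⟩
    rw [hf.1.eq_X_add_C hf.2]; simp
  · intro x _
    simp [lam, gam]

theorem hh_one_pow (m : ℕ) : hh (lam (F := F)) 1 ^ m =
    ∑ x : Fin m → F, MonoidAlgebra.single
      ((Multiplicative.ofAdd (∑ i, x i), ∏ i, x i) : G F) (1 : ℚ) := by
  classical
  rw [hh_one, Fintype.sum_pow]
  apply Finset.sum_congr rfl
  intro x _
  rw [MonoidAlgebra.prod_single]
  congr 1
  · ext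
    · simp [Prod.fst_prod]
    · simp [Prod.snd_prod]
  · simp

section Ext
variable {E : Type*} [Field E] [Fintype E] [Algebra F E]

theorem gam_minpoly_pow (α : E) :
    gam (minpoly F α) ^ (Module.finrank F E / (minpoly F α).natDegree) =
      (Multiplicative.ofAdd (Algebra.trace F E α), Algebra.norm F α) := by
  have hint : IsIntegral F α := .of_finite F α
  have hfr : Module.finrank F E / (minpoly F α).natDegree =
      Module.finrank (IntermediateField.adjoin F {α}) E := by
    rw [← IntermediateField.adjoin.finrank hint,
      ← Module.finrank_mul_finrank F (IntermediateField.adjoin F {α}) E,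
      Nat.mul_div_cancel_left _ Module.finrank_pos]
  rw [hfr, gam, trace_eq_finrank_mul_minpoly_nextCoeff, Algebra.norm_eq_norm_adjoin]
  rw [Prod.pow_mk, ← ofAdd_nsmul, nsmul_eq_mul]
  congr 2
  have := Algebra.PowerBasis.norm_gen_eq_coeff_zero_minpoly
    (IntermediateField.adjoin.powerBasis hint)
  rw [IntermediateField.adjoin.powerBasis_gen, IntermediateField.adjoin.powerBasis_dim,
    IntermediateField.minpoly_gen] at this
  exact this.symm

open Classical in
theorem card_fiber (P : F[X]) (d : ℕ) (hP : P ∈ Irr F d) (hd : d ∣ Module.finrank F E) :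
    (Finset.univ.filter (fun α : E => minpoly F α = P)).card = d := by
  rw [mem_Irr] at hP
  obtain ⟨hm, hdeg, hi⟩ := hP
  have hsep : P.Separable := PerfectField.separable_of_irreducible hi
  have hdv : P ∣ X ^ (Nat.card F) ^ (Module.finrank F E) - X :=
    hi.natDegree_dvd_iff_dvd_X_pow_card_pow_sub_X.1 (hdeg ▸ hd)
  rw [← Module.natCard_eq_pow_finrank, Nat.card_eq_fintype_card] at hdv
  have hsp : (P.map (algebraMap F E)).Splits := by
    refine Splits.of_dvd ?_ ?_ (map_dvd (algebraMap F E) hdv)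
    · have := FiniteField.isSplittingField_sub E F
      exact this.splits
    · exact map_ne_zero (FiniteField.X_pow_card_sub_X_ne_zero _ Fintype.one_lt_card)
  have h := card_rootSet_eq_natDegree (K := E) hsep hsp
  rw [← hdeg, ← h, Fintype.card_subtype]
  congr 1
  ext α
  simp only [Finset.mem_filter, Finset.mem_univ, true_and, mem_rootSet]
  constructor
  · rintro rfl
    exact ⟨hi.ne_zero, minpoly.aeval _ _⟩
  · rintro ⟨_, h⟩
    exact (minpoly.eq_of_irreducible_of_monic hi h hm).symm

theorem NN_eq : NN (lam (F := F)) (Module.finrank F E) =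
    ∑ α : E, MonoidAlgebra.single
      ((Multiplicative.ofAdd (Algebra.trace F E α), Algebra.norm F α) : G F) (1 : ℚ) := by
  classical
  have hpos : 0 < Module.finrank F E := Module.finrank_pos
  have h1 : ∀ α : E, MonoidAlgebra.single
      ((Multiplicative.ofAdd (Algebra.trace F E α), Algebra.norm F α) : G F) (1 : ℚ)
      = lam (minpoly F α) ^ (Module.finrank F E / (minpoly F α).natDegree) := by
    intro α
    rw [lam, MonoidAlgebra.single_pow, gam_minpoly_pow, one_pow]
  rw [Finset.sum_congr rfl (fun α _ => h1 α), NN, Finset.sum_sigma']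
  have hdvd : ∀ α : E, (minpoly F α).natDegree ∣ Module.finrank F E := fun α =>
    minpoly.degree_dvd (.of_finite F α)
  rw [← Finset.sum_fiberwise_of_maps_to (s := Finset.univ) (g := fun α : E =>
    (⟨((minpoly F α).natDegree, Module.finrank F E / (minpoly F α).natDegree), minpoly F α⟩ :
      (_ : ℕ × ℕ) × F[X]))]
  · apply Finset.sum_congr rfl
    rintro ⟨⟨d, j⟩, P⟩ h
    simp only [Finset.mem_sigma, Nat.mem_divisorsAntidiagonal] at h
    obtain ⟨⟨h1, h2⟩, hP⟩ := h
    have hPd := (mem_Irr.1 hP).2.1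
    have hdpos : 0 < d := Nat.pos_of_ne_zero (by rintro rfl; simp at h1; omega)
    have hj : Module.finrank F E / d = j := by rw [← h1, Nat.mul_div_cancel_left _ hdpos]
    have hfil : (Finset.univ.filter (fun α : E => (⟨((minpoly F α).natDegree,
        Module.finrank F E / (minpoly F α).natDegree), minpoly F α⟩ :
        (_ : ℕ × ℕ) × F[X]) = ⟨(d, j), P⟩)) = Finset.univ.filter (fun α : E => minpoly F α = P) := by
      ext α
      simp only [Finset.mem_filter, Finset.mem_univ, true_and]
      constructor
      · intro h
        simp at h; exact h.2
      · rintro rfl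
        rw [hPd, hj]
    rw [hfil]
    have : ∀ α ∈ Finset.univ.filter (fun α : E => minpoly F α = P),
        lam (minpoly F α) ^ (Module.finrank F E / (minpoly F α).natDegree) = lam P ^ j := by
      intro α hα
      rw [Finset.mem_filter] at hα
      rw [hα.2, hPd, hj]
    rw [Finset.sum_congr rfl this, Finset.sum_const, card_fiber P d hP ⟨j, h1.symm⟩, nsmul_eq_mul]
  · intro α _
    have hint : IsIntegral F α := .of_finite F α
    simp only [Finset.mem_sigma, Nat.mem_divisorsAntidiagonal, mem_Irr]
    exact ⟨⟨Nat.mul_div_cancel' (hdvd α), hpos.ne'⟩, minpoly.monic hint, trivial,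
      minpoly.irreducible hint⟩
end Ext

open Classical in
theorem total {ι : Type*} [Fintype ι] (g : ι → G F) :
    ∑ s : Multiplicative F, ∑ p ∈ Finset.univ.filter (fun p : F => p ≠ 0),
      (∑ i, MonoidAlgebra.single (g i) (1 : ℚ)).coeff (s, p) =
    ((Finset.univ.filter (fun i => (g i).2 ≠ 0)).card : ℚ) := by
  simp only [coeff_sum_single]
  have : ∀ s : Multiplicative F, ∑ p ∈ Finset.univ.filter (fun p : F => p ≠ 0),
      ∑ i, (if g i = (s, p) then (1 : ℚ) else 0) = 
      ∑ i, ∑ p ∈ Finset.univ.filter (fun p : F => p ≠ 0), (if g i = (s, p) then (1 : ℚ) else 0) :=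
    fun s => Finset.sum_comm
  simp only [this]
  rw [Finset.sum_comm, Finset.card_filter]
  push_cast
  apply Finset.sum_congr rfl
  intro i _
  obtain ⟨s, p⟩ := g i
  simp only [Prod.mk.injEq]
  rw [Finset.sum_eq_single s]
  · simp
  · intro t _ ht
    simp [ht.symm]
  · simp

theorem coeff_card {ι : Type*} [Fintype ι] (g : ι → G F) (z : G F) :
    (∑ i, MonoidAlgebra.single (g i) (1 : ℚ)).coeff z = (Nat.card {i // g i = z} : ℚ) := by
  classical
  rw [coeff_sum_single, Nat.card_eq_fintype_card, Fintype.card_subtype, Finset.card_filter]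
  push_cast
  rfl

theorem toric (n : ℕ) (a b u : F) (ha : a ≠ 0) (hb : b ≠ 0) (hu : u = b / a ^ (n + 1)) :
    Nat.card {x : Fin (n + 1) → F // ∑ i, x i = a ∧ ∏ i, x i = b} =
    Nat.card {x : Fin n → F // (∀ i, x i ≠ 0) ∧ (∑ i, x i) + u / (∏ i, x i) = 1} := by
  have hau : b = u * a ^ (n + 1) := by rw [hu]; field_simp
  refine Nat.card_congr
    { toFun := fun x => ⟨fun i => x.1 i.succ / a, ?_, ?_⟩
      invFun := fun y => ⟨Fin.cons (a * (u / ∏ i, y.1 i)) (fun i => a * y.1 i), ?_, ?_⟩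
      left_inv := ?_
      right_inv := ?_ }
  · obtain ⟨x, h1, h2⟩ := x
    intro i
    have : x i.succ ≠ 0 := by
      intro h
      apply hb
      rw [← h2]
      exact Finset.prod_eq_zero (Finset.mem_univ _) h
    exact div_ne_zero this ha
  · obtain ⟨x, h1, h2⟩ := x
    rw [Fin.sum_univ_succ] at h1
    rw [Fin.prod_univ_succ] at h2
    have hne : ∏ i : Fin n, x i.succ ≠ 0 := by
      intro h; rw [h, mul_zero] at h2; exact hb h2.symm
    simp only
    rw [← Finset.sum_div, Finset.prod_div_distrib, hu, Finset.prod_const, Finset.card_univ,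
      Fintype.card_fin, ← h2]
    field_simp
    rw [← h1]; ring
  · obtain ⟨y, h0, h1⟩ := y
    simp only [Fin.sum_univ_succ, Fin.cons_zero, Fin.cons_succ]
    rw [← Finset.mul_sum]
    linear_combination a * h1
  · obtain ⟨y, h0, h1⟩ := y
    have hne : ∏ i, y i ≠ 0 := Finset.prod_ne_zero_iff.2 (fun i _ => h0 i)
    simp only [Fin.prod_univ_succ, Fin.cons_zero, Fin.cons_succ]
    rw [Finset.prod_mul_distrib, Finset.prod_const, Finset.card_univ, Fintype.card_fin, hau]
    field_simp
    ring
  · rintro ⟨x, h1, h2⟩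
    rw [Fin.prod_univ_succ] at h2
    have hne : ∏ i : Fin n, x i.succ ≠ 0 := by
      intro h; rw [h, mul_zero] at h2; exact hb h2.symm
    apply Subtype.ext
    funext i
    refine Fin.cases ?_ (fun j => ?_) i
    · simp only [Fin.cons_zero]
      rw [Finset.prod_div_distrib, hu, Finset.prod_const, Finset.card_univ,
        Fintype.card_fin, ← h2]
      field_simp
      ring
    · simp only [Fin.cons_succ]
      field_simp
  · rintro ⟨y, h0, h1⟩
    apply Subtype.ext
    funext i
    simp only [Fin.cons_succ]
    field_simp

theorem main (q n : ℕ)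
    (F E : Type*) [Field F] [Fintype F] [Field E] [Fintype E] [Algebra F E]
    (hq : Fintype.card F = q) (hE : Module.finrank F E = n + 1)
    (a b : F) (ha : a ≠ 0) (hb : b ≠ 0) (u : F) (hu : u = b / a ^ (n + 1)) :
    (Nat.card {α : E // Algebra.trace F E α = a ∧ Algebra.norm F α = b} : ℚ)
      = ((q : ℚ) ^ n - 1) / ((q : ℚ) - 1)
        + (-1) ^ n * ((Nat.card {x : Fin n → F // (∀ i, x i ≠ 0) ∧
              (∑ i, x i) + u / (∏ i, x i) = 1} : ℚ)
            - (((q : ℚ) - 1) ^ n - (-1) ^ n) / (q : ℚ)) := by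
  classical
  have hmod := hd_mod (lam (F := F)) lam_one lam_mul (II F) hh_mem n
  rw [← hE, NN_eq (F := F) (E := E), hh_one_pow, hE] at hmod
  set T : MonoidAlgebra ℚ (G F) := ∑ α : E, MonoidAlgebra.single
      ((Multiplicative.ofAdd (Algebra.trace F E α), Algebra.norm F α) : G F) (1 : ℚ) with hT
  set W : MonoidAlgebra ℚ (G F) := ∑ x : Fin (n + 1) → F, MonoidAlgebra.single
      ((Multiplicative.ofAdd (∑ i, x i), ∏ i, x i) : G F) (1 : ℚ) with hW
  have hcoef : ∀ z, (T - (-1) ^ n * W).coeff z = T.coeff z - (-1) ^ n * W.coeff z := by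
    intro z
    have : (-1 : MonoidAlgebra ℚ (G F)) ^ n * W = ((-1 : ℚ) ^ n) • W := by
      rcases neg_one_pow_eq_or ℚ n with h | h
      · rcases Nat.even_or_odd n with h' | h'
        · simp [h'.neg_one_pow]
        · rw [h'.neg_one_pow] at h; norm_num at h
      · rcases Nat.even_or_odd n with h' | h'
        · rw [h'.neg_one_pow] at h; norm_num at h
        · simp [h'.neg_one_pow]
    rw [this]
    simp
  have hTc : T.coeff (Multiplicative.ofAdd a, b) =
      (Nat.card {α : E // Algebra.trace F E α = a ∧ Algebra.norm F α = b} : ℚ) := by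
    rw [hT, coeff_card]
    simp only [Prod.mk.injEq, EmbeddingLike.apply_eq_iff_eq]
  have hWc : W.coeff (Multiplicative.ofAdd a, b) =
      (Nat.card {x : Fin n → F // (∀ i, x i ≠ 0) ∧ (∑ i, x i) + u / (∏ i, x i) = 1} : ℚ) := by
    rw [hW, coeff_card, ← toric n a b u ha hb hu]
    simp only [Prod.mk.injEq, EmbeddingLike.apply_eq_iff_eq]
  have hcardF0 : (Finset.univ.filter (fun p : F => p ≠ 0)).card = q - 1 := by
    rw [Finset.filter_ne' , Finset.card_erase_of_mem (Finset.mem_univ _), Finset.card_univ, hq]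
  have hq2 : 2 ≤ q := hq ▸ Fintype.one_lt_card
  have hTt := total (F := F) (fun α : E => ((Multiplicative.ofAdd (Algebra.trace F E α), Algebra.norm F α) : G F))
  have hWt := total (F := F) (fun x : Fin (n + 1) → F => ((Multiplicative.ofAdd (∑ i, x i), ∏ i, x i) : G F))
  rw [← hT] at hTt
  rw [← hW] at hWt
  have hTn : (Finset.univ.filter (fun α : E => Algebra.norm F α ≠ 0)).card = q ^ (n + 1) - 1 := by
    have hc : Fintype.card E = q ^ (n + 1) := by
      rw [Module.card_eq_pow_finrank (K := F), hE, hq]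
    simp only [ne_eq, Algebra.norm_eq_zero_iff]
    rw [← hc, ← Finset.card_univ, ← Finset.card_erase_of_mem (Finset.mem_univ (0 : E)), ← Finset.filter_ne']
  have hWn : (Finset.univ.filter (fun x : Fin (n + 1) → F => ∏ i, x i ≠ 0)).card = (q - 1) ^ (n + 1) := by
    have : (Finset.univ.filter (fun x : Fin (n + 1) → F => ∏ i, x i ≠ 0)) =
        Fintype.piFinset (fun _ => Finset.univ.filter (fun p : F => p ≠ 0)) := by
      ext x
      simp [Finset.prod_eq_zero_iff]
    rw [this, Fintype.card_piFinset, Finset.prod_const, hcardF0]; simp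
  simp only at hTt hWt
  rw [hTn] at hTt
  rw [hWn] at hWt
  set c := T.coeff (Multiplicative.ofAdd a, b) - (-1) ^ n * W.coeff (Multiplicative.ofAdd a, b) with hc
  have hsum : ∑ s : Multiplicative F, ∑ p ∈ Finset.univ.filter (fun p : F => p ≠ 0),
      (T.coeff (s, p) - (-1) ^ n * W.coeff (s, p)) = (q : ℚ) * ((q - 1 : ℕ) : ℚ) * c := by
    have : ∀ s : Multiplicative F, ∑ p ∈ Finset.univ.filter (fun p : F => p ≠ 0),
      (T.coeff (s, p) - (-1) ^ n * W.coeff (s, p)) = ((q - 1 : ℕ) : ℚ) * c := by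
      intro s
      rw [← hcardF0, ← nsmul_eq_mul, ← Finset.sum_const]
      apply Finset.sum_congr rfl
      intro p hp
      rw [Finset.mem_filter] at hp
      rw [hc, ← hcoef, ← hcoef]
      exact hmod _ _ _ _ hp.2 hb
    simp only [this]
    rw [Finset.sum_const, Finset.card_univ, Fintype.card_multiplicative, hq, nsmul_eq_mul, mul_assoc]
  simp only [Finset.sum_sub_distrib, ← Finset.mul_sum] at hsum
  rw [hTt, hWt] at hsum
  have hpow : 1 ≤ q ^ (n + 1) := Nat.one_le_pow _ _ (by omega)
  push_cast [Nat.cast_sub hpow, Nat.cast_sub (by omega : 1 ≤ q)] at hsum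
  rw [← hTc, ← hWc]
  have hq0 : (q : ℚ) ≠ 0 := by positivity
  have hq1 : (q : ℚ) - 1 ≠ 0 := by
    have : (2 : ℚ) ≤ q := by exact_mod_cast hq2
    intro h; linarith
  have hTe : T.coeff (Multiplicative.ofAdd a, b) = c + (-1) ^ n * W.coeff (Multiplicative.ofAdd a, b) := by
    rw [hc]; ring
  rw [hTe]
  have hce : c = ((q : ℚ) ^ (n + 1) - 1 - (-1) ^ n * ((q : ℚ) - 1) ^ (n + 1)) / (q * (q - 1)) := by
    rw [eq_div_iff (mul_ne_zero hq0 hq1), hsum]; ring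
  have hsq : ((-1 : ℚ) ^ n) * (-1) ^ n = 1 := by rw [← mul_pow]; simp
  rw [hce]
  generalize W.coeff (Multiplicative.ofAdd a, b) = w
  have hr : (-1 : ℚ) ^ n * (w - (((q : ℚ) - 1) ^ n - (-1) ^ n) / (q : ℚ)) =
      (-1) ^ n * w - (-1) ^ n * ((q : ℚ) - 1) ^ n / q + 1 / q := by
    linear_combination (1 / (q : ℚ)) * hsq
  rw [hr]
  field_simp
  ring

end
end TN

/-- **Lemma 2.1**: with `u = b/a^{n+1}`,
`N_{n+1}(a,b) = (q^n − 1)/(q−1) + (−1)^n (N(u) − ((q−1)^n − (−1)^n)/q)`,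
where `N(u)` counts points on the toric hypersurface
`X_1 + ⋯ + X_n + u/(X_1⋯X_n) = 1`. -/
theorem trace_norm_count_eq_toric_count (q n : ℕ) (hn : 1 ≤ n)
    (F E : Type*) [Field F] [Fintype F] [Field E] [Fintype E] [Algebra F E]
    (hq : Fintype.card F = q) (hE : Module.finrank F E = n + 1)
    (a b : F) (ha : a ≠ 0) (hb : b ≠ 0) (u : F) (hu : u = b / a ^ (n + 1)) :
    (Nat.card {α : E // Algebra.trace F E α = a ∧ Algebra.norm F α = b} : ℚ)
      = ((q : ℚ) ^ n - 1) / ((q : ℚ) - 1)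
        + (-1) ^ n * ((Nat.card {x : Fin n → F // (∀ i, x i ≠ 0) ∧
              (∑ i, x i) + u / (∏ i, x i) = 1} : ℚ)
            - (((q : ℚ) - 1) ^ n - (-1) ^ n) / (q : ℚ)) := by
  exact TN.main q n F E hq hE a b ha hb u hu
end

section
/- Let q be a prime power, let F_q be the finite field with q elements, let ℓ ≥ 3 be a prime, and let a, b be nonzero elements of F_q. Let R be the number of elements c ∈ F_q with ℓ·c = a and c^ℓ = b. Then R ∈ {0, 1} and N_ℓ(a,b) ≡ R (mod ℓ). -/
/-- For a prime `ℓ ≥ 3` and `a, b ∈ 𝔽_q^*`, if `R` is the number of `c ∈ 𝔽_q` with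
`ℓc = a` and `c^ℓ = b`, then `R ∈ {0,1}` and `N_ℓ(a,b) ≡ R (mod ℓ)`. -/
theorem trace_norm_count_mod_prime (q ℓ : ℕ) (hℓ : ℓ.Prime) (hℓ3 : 3 ≤ ℓ)
    (F E : Type*) [Field F] [Fintype F] [Field E] [Fintype E] [Algebra F E]
    (hq : Fintype.card F = q) (hE : Module.finrank F E = ℓ)
    (a b : F) (ha : a ≠ 0) (hb : b ≠ 0)
    (R : ℕ) (hR : R = Nat.card {c : F // (ℓ : F) * c = a ∧ c ^ ℓ = b}) :
    (R = 0 ∨ R = 1) ∧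
      Nat.card {α : E // Algebra.trace F E α = a ∧ Algebra.norm F α = b} ≡ R [MOD ℓ] := by
  constructor
  · have hs : Subsingleton {c : F // (ℓ : F) * c = a ∧ c ^ ℓ = b} := by
      refine ⟨fun x y => Subtype.ext ?_⟩
      have hl : (ℓ : F) ≠ 0 := by
        intro h
        apply ha
        exact x.2.1.symm.trans (mul_eq_zero_of_left h _)
      exact mul_left_cancel₀ hl (x.2.1.trans y.2.1.symm)
    have := Finite.card_le_one_iff_subsingleton.mpr hs
    omega
  · have : Fact ℓ.Prime := ⟨hℓ⟩
    have : FiniteDimensional F E := Module.Finite.of_finite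
    have hG : IsPGroup ℓ (E ≃ₐ[F] E) := by
      apply IsPGroup.of_card (n := 1)
      rw [IsGalois.card_aut_eq_finrank, hE, pow_one]
    let S : SubMulAction (E ≃ₐ[F] E) E :=
      { carrier := {α | Algebra.trace F E α = a ∧ Algebra.norm F α = b}
        smul_mem' := by
          rintro g x ⟨h1, h2⟩
          refine ⟨?_, ?_⟩
          · rw [AlgEquiv.smul_def, Algebra.trace_eq_of_algEquiv, h1]
          · rw [AlgEquiv.smul_def, Algebra.norm_eq_of_algEquiv, h2] }
    have key := hG.card_modEq_card_fixedPoints S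
    have hcard : Nat.card (MulAction.fixedPoints (E ≃ₐ[F] E) S) = R := by
      rw [hR]
      symm
      have hmem : ∀ c : F, ((ℓ : F) * c = a ∧ c ^ ℓ = b) ↔ algebraMap F E c ∈ S := by
        intro c
        change _ ↔ (Algebra.trace F E (algebraMap F E c) = a ∧
          Algebra.norm F (algebraMap F E c) = b)
        rw [Algebra.trace_algebraMap, Algebra.norm_algebraMap, hE, nsmul_eq_mul]
      refine Nat.card_congr (Equiv.ofBijective (fun c => ⟨⟨algebraMap F E c.1, (hmem c.1).1 c.2⟩,
        fun g => Subtype.ext (g.commutes c.1)⟩) ⟨?_, ?_⟩)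
      · intro x y h
        apply Subtype.ext
        apply (algebraMap F E).injective
        exact congrArg (fun z => (z.1.1 : E)) h
      · rintro ⟨⟨x, hx⟩, hf⟩
        have : x ∈ Set.range (algebraMap F E) := by
          rw [IsGalois.mem_range_algebraMap_iff_fixed]
          intro g
          exact congrArg Subtype.val (hf g)
        obtain ⟨c, rfl⟩ := this
        exact ⟨⟨c, (hmem c).2 hx⟩, rfl⟩
    rw [hcard] at key
    exact key
end

section
/- Let q be a prime power, let F_q be the finite field with q elements, let u be a nonzero element of F_q, and let n ≥ 1 be an integer. Let ψ be the canonical additive character of F_q (ψ(x) = exp(2πi·Tr_{F_q/F_p}(x)/p)) and for each multiplicative character χ of F_q^* let G(χ) = Σ_{x ∈ F_q^*} ψ(x)χ(x) be the associated Gauss sum. Then q(q−1)·N(u) = (q−1)^{n+1} + Σ_χ G(χ)^{n+1} · G(χ̄^{n+1}) · χ̄((−1)^{n+1} u), where the sum is over all multiplicative characters χ of F_q^* and χ̄ denotes the complex conjugate (inverse) character. -/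
lemma tc_sum_char {F : Type*} [Field F] [Fintype F] [DecidableEq F] [Fintype (MulChar F ℂ)]
    (a : Fˣ) :
    ∑ χ : MulChar F ℂ, χ (a : F) = if a = 1 then ((Fintype.card F : ℂ) - 1) else 0 := by
  split_ifs with ha
  · have h := MulChar.card_eq_card_units_of_hasEnoughRootsOfUnity F ℂ
    rw [Nat.card_eq_fintype_card, Nat.card_eq_fintype_card, Fintype.card_units] at h
    subst ha
    simp only [Units.val_one, map_one, Finset.sum_const, Finset.card_univ, nsmul_eq_mul, mul_one]
    rw [h, Nat.cast_sub Fintype.card_pos, Nat.cast_one]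
  · have ha' : (a : F) ≠ 1 := fun h => ha (Units.ext h)
    obtain ⟨χ, hχ⟩ := MulChar.exists_apply_ne_one_of_hasEnoughRootsOfUnity F ℂ ha'
    refine eq_zero_of_mul_eq_self_left hχ ?_
    simp only [Finset.mul_sum, ← MulChar.mul_apply]
    exact Fintype.sum_bijective _ (Group.mulLeft_bijective χ) _ _ fun χ' ↦ rfl

lemma tc_expand {F : Type*} [Field F] [Fintype F] [DecidableEq F] (ψ : AddChar F ℂ) (n : ℕ)
    (u : Fˣ) (χ : MulChar F ℂ) :
    (∑ x : Fˣ, ψ x * χ x) ^ (n + 1) * (∑ x : Fˣ, ψ x * (χ⁻¹ ^ (n + 1)) x) *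
      χ⁻¹ ((-1) ^ (n + 1) * u) =
    ∑ t : Fˣ, ∑ y : Fin (n + 1) → Fˣ, ψ ((∑ i, (y i : F)) + t) *
      χ (((∏ i, y i) * ((-t) ^ (n + 1) * u)⁻¹ : Fˣ) : F) := by
  rw [Fintype.sum_pow, Finset.sum_mul_sum, Finset.sum_comm, Finset.sum_mul]
  refine Finset.sum_congr rfl fun t _ => ?_
  rw [Finset.sum_mul]
  refine Finset.sum_congr rfl fun y _ => ?_
  have hsum : ψ (∑ i, (y i : F)) = ∏ i, ψ (y i : F) := by
    have := map_prod ψ.toMonoidHom (fun i => Multiplicative.ofAdd (y i : F)) Finset.univ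
    rw [← ofAdd_sum] at this
    exact this
  rw [MulChar.pow_apply_coe, MulChar.inv_apply', MulChar.inv_apply', Finset.prod_mul_distrib,
    AddChar.map_add_eq_mul, hsum]
  have h1 : (((∏ i, y i) * ((-t) ^ (n + 1) * u)⁻¹ : Fˣ) : F) =
      (∏ i, (y i : F)) * (((t : F)⁻¹) ^ (n + 1) * ((-1) ^ (n + 1) * (u : F))⁻¹) := by
    rw [neg_pow]
    push_cast
    simp only [mul_inv, inv_pow]
    ring
  rw [h1, map_mul, map_mul, map_pow, map_prod]
  ring

lemma tc_sum {F : Type*} [Field F] [Fintype F] [DecidableEq F] [Fintype (MulChar F ℂ)]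
    (ψ : AddChar F ℂ) (n : ℕ) (u : Fˣ) :
    ∑ χ : MulChar F ℂ, (∑ x : Fˣ, ψ x * χ x) ^ (n + 1) * (∑ x : Fˣ, ψ x * (χ⁻¹ ^ (n + 1)) x) *
      χ⁻¹ ((-1) ^ (n + 1) * u) =
    ((Fintype.card F : ℂ) - 1) * ∑ t : Fˣ, ∑ z : Fin (n + 1) → Fˣ,
      if ∏ i, z i = u then ψ (t * ((∑ i, (z i : F)) - 1)) else 0 := by
  simp only [tc_expand]
  rw [Finset.sum_comm, Finset.mul_sum, ← Equiv.sum_comp (Equiv.neg Fˣ)]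
  refine Finset.sum_congr rfl fun t _ => ?_
  rw [Finset.sum_comm, Finset.mul_sum,
    ← Equiv.sum_comp (Equiv.mulLeft (fun _ : Fin (n + 1) => t))]
  refine Finset.sum_congr rfl fun z _ => ?_
  rw [← Finset.mul_sum, tc_sum_char]
  have h : (∏ i, (Equiv.mulLeft (fun _ : Fin (n + 1) => t)) z i) *
      ((- (Equiv.neg Fˣ) t) ^ (n + 1) * u)⁻¹ = (∏ i, z i) * u⁻¹ := by
    simp only [Equiv.coe_mulLeft, Equiv.neg_apply, neg_neg, Pi.mul_apply, Finset.prod_mul_distrib,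
      Finset.prod_const, Finset.card_univ, Fintype.card_fin, mul_inv]
    rw [mul_comm (t ^ (n + 1)), mul_assoc, mul_inv_cancel_left]
  rw [h]
  simp only [mul_inv_eq_one]
  split_ifs with hz
  · rw [mul_comm]
    congr 2
    simp [← Finset.mul_sum]
    ring
  · simp

lemma tc_cons {F : Type*} [Field F] [Fintype F] [DecidableEq F] (n : ℕ) (u : Fˣ) (g : F → ℂ) :
    (∑ z : Fin (n + 1) → Fˣ, if ∏ i, z i = u then g (∑ i, (z i : F)) else 0) =
      ∑ x : Fin n → Fˣ, g ((∑ i, (x i : F)) + u / ∏ i, (x i : F)) := by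
  rw [← (Fin.consEquiv (fun _ => Fˣ)).sum_comp, Fintype.sum_prod_type, Finset.sum_comm]
  refine Finset.sum_congr rfl fun x _ => ?_
  simp only [Fin.consEquiv, Equiv.coe_fn_mk, Fin.prod_univ_succ, Fin.sum_univ_succ, Fin.cons_zero,
    Fin.cons_succ, ← eq_div_iff_mul_eq']
  rw [Finset.sum_ite_eq' Finset.univ (u / ∏ i, x i)]
  simp [add_comm]

lemma tc_card {F : Type*} [Field F] [Fintype F] [DecidableEq F] (n : ℕ) (u : F) :
    (Nat.card {x : Fin n → F // (∀ i, x i ≠ 0) ∧ (∑ i, x i) + u / (∏ i, x i) = 1} : ℂ) =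
      ∑ x : Fin n → Fˣ, if (∑ i, (x i : F)) + u / (∏ i, (x i : F)) = 1 then (1 : ℂ) else 0 := by
  rw [Finset.sum_boole, ← Fintype.card_subtype, ← Nat.card_eq_fintype_card]
  congr 1
  refine Nat.card_congr
    { toFun := fun x => ⟨fun i => Units.mk0 (x.1 i) (x.2.1 i), by simpa using x.2.2⟩
      invFun := fun x => ⟨fun i => (x.1 i : F), fun i => (x.1 i).ne_zero, x.2⟩
      left_inv := fun x => by ext; simp
      right_inv := fun x => by ext; simp }

lemma tc_main {F : Type*} [Field F] [Fintype F] [DecidableEq F] [Fintype (MulChar F ℂ)]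
    (ψ : AddChar F ℂ) (hψ : ψ.IsPrimitive) (n : ℕ) (u : Fˣ) :
    (Fintype.card F : ℂ) * ((Fintype.card F : ℂ) - 1) *
        (Nat.card {x : Fin n → F // (∀ i, x i ≠ 0) ∧ (∑ i, x i) + u / (∏ i, x i) = 1} : ℂ)
      = ((Fintype.card F : ℂ) - 1) ^ (n + 1) +
      ∑ χ : MulChar F ℂ, (∑ x : Fˣ, ψ x * χ x) ^ (n + 1) *
        (∑ x : Fˣ, ψ x * (χ⁻¹ ^ (n + 1)) x) * χ⁻¹ ((-1) ^ (n + 1) * u) := by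
  rw [tc_sum, tc_card]
  have hcons : ∀ t : Fˣ, (∑ z : Fin (n + 1) → Fˣ,
      if ∏ i, z i = u then ψ (t * ((∑ i, (z i : F)) - 1)) else 0) =
      ∑ x : Fin n → Fˣ, ψ (t * (((∑ i, (x i : F)) + u / ∏ i, (x i : F)) - 1)) :=
    fun t => tc_cons n u (fun s => ψ (t * (s - 1)))
  simp only [hcons]
  rw [Finset.sum_comm]
  have hunit : ∀ b : F, ∑ t : Fˣ, ψ (t * b) =
      (Fintype.card F : ℂ) * (if b = 0 then 1 else 0) - 1 := by
    intro b
    have h1 := AddChar.sum_mulShift b hψ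
    have h2 : ∑ x : F, ψ (x * b) = ψ (0 * b) + ∑ t : Fˣ, ψ (t * b) := by
      rw [Fintype.sum_eq_add_sum_subtype_ne (fun x : F => ψ (x * b)) (0 : F)]
      congr 1
      exact (Equiv.sum_comp (unitsEquivNeZero (G₀ := F))
        (fun x : {a : F // a ≠ 0} => ψ ((x : F) * b))).symm
    rw [h2] at h1
    simp only [zero_mul, AddChar.map_zero_eq_one] at h1
    rw [← sub_eq_iff_eq_add'.mpr h1.symm]
    split_ifs <;> simp
  simp only [hunit, sub_eq_zero, Finset.sum_sub_distrib, ← Finset.mul_sum]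
  have hc : ((Fintype.card Fˣ : ℕ) : ℂ) = (Fintype.card F : ℂ) - 1 := by
    rw [Fintype.card_units, Nat.cast_sub Fintype.card_pos, Nat.cast_one]
  have : ∑ _x : Fin n → Fˣ, (1 : ℂ) = ((Fintype.card F : ℂ) - 1) ^ n := by
    rw [← hc]; simp
  rw [this]
  ring

/-- **Equation (2.1)**: with `ψ` the canonical additive character of `𝔽_q` and `G(χ)` the Gauss
sum, for `u ∈ 𝔽_q^*` and `n ≥ 1`,
`q(q−1)·N(u) = (q−1)^{n+1} + Σ_χ G(χ)^{n+1} G(χ̄^{n+1}) χ̄((−1)^{n+1}u)`. -/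
theorem toric_count_gauss_sum (p q n : ℕ) [Fact p.Prime] (hn : 1 ≤ n)
    (F : Type*) [Field F] [Fintype F] [DecidableEq F] [Algebra (ZMod p) F]
    (hq : Fintype.card F = q)
    (u : F) (hu : u ≠ 0)
    (ψ : F → ℂ)
    (hψ : ∀ x : F, ψ x = Complex.exp (2 * Real.pi * Complex.I *
        ((Algebra.trace (ZMod p) F x).val : ℂ) / (p : ℂ)))
    (G : MulChar F ℂ → ℂ)
    (hG : ∀ χ : MulChar F ℂ, G χ = ∑ x : Fˣ, ψ x * χ x) :
    (q : ℂ) * ((q : ℂ) - 1) *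
        (Nat.card {x : Fin n → F // (∀ i, x i ≠ 0) ∧ (∑ i, x i) + u / (∏ i, x i) = 1} : ℂ)
      = ((q : ℂ) - 1) ^ (n + 1) +
          ∑ᶠ χ : MulChar F ℂ,
            G χ ^ (n + 1) * G (χ⁻¹ ^ (n + 1)) * χ⁻¹ ((-1) ^ (n + 1) * u) := by
  classical
  have hfin := Fintype.ofFinite (MulChar F ℂ)
  subst hq
  let ψ' : AddChar F ℂ := (ZMod.stdAddChar (N := p)).compAddMonoidHom
    (Algebra.trace (ZMod p) F).toAddMonoidHom
  have hval : ∀ x, ψ x = ψ' x := by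
    intro x
    rw [hψ]
    change _ = ZMod.stdAddChar (Algebra.trace (ZMod p) F x)
    rw [ZMod.stdAddChar_apply, ZMod.toCircle_apply]
  have hprim : ψ'.IsPrimitive := by
    apply AddChar.IsPrimitive.of_ne_one
    intro h
    apply Algebra.trace_ne_zero (ZMod p) F
    ext x
    apply ZMod.injective_stdAddChar (N := p)
    have := DFunLike.congr_fun h x
    change ZMod.stdAddChar (Algebra.trace (ZMod p) F x) = _ at this
    simpa using this
  have h := tc_main ψ' hprim n (Units.mk0 u hu)
  rw [Units.val_mk0] at h
  rw [finsum_eq_sum_of_fintype, h]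
  simp only [hG, hval]
end

section
/- Let q be a prime power, let F_q be the finite field with q elements, let a, b be nonzero elements of F_q, and let n ≥ 1 be an integer. Let ψ be the canonical additive character of F_q (ψ(x) = exp(2πi·Tr_{F_q/F_p}(x)/p)) and for each multiplicative character χ of F_q^* let G(χ) = Σ_{x ∈ F_q^*} ψ(x)χ(x) be the associated Gauss sum. Then q(q−1)·N_{n+1}(a,b) = q^{n+1} − 1 + (−1)^n · Σ_χ G(χ)^{n+1} · G(χ̄^{n+1}) · χ̄((−1)^{n+1}·b/a^{n+1}), where the sum is over all multiplicative characters χ of F_q^* and χ̄ denotes the complex conjugate (inverse) character. -/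
namespace HasseDav

set_option linter.unusedSectionVars false

open Polynomial

variable {F : Type*} [Field F] [Fintype F]

theorem finite_natDegree_le (N : ℕ) : {f : F[X] | f.natDegree ≤ N}.Finite := by
  have h : Function.Injective (fun (f : {f : F[X] | f.natDegree ≤ N}) (i : Fin (N+1)) =>
      f.1.coeff i) := by
    intro f g hfg
    ext i
    by_cases hi : i < N + 1
    · exact congrFun hfg ⟨i, hi⟩
    · have h1 := f.2
      have h2 := g.2
      simp only [Set.mem_ofPred_eq] at h1 h2
      rw [coeff_eq_zero_of_natDegree_lt (by omega), coeff_eq_zero_of_natDegree_lt (by omega)]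
  exact Finite.of_injective _ h

/-- monic polynomials of degree `d` -/
noncomputable def Mon (F : Type*) [Field F] [Fintype F] (d : ℕ) : Finset F[X] :=
  ((finite_natDegree_le (F := F) d).subset (t := {f : F[X] | f.Monic ∧ f.natDegree = d})
    (fun _ h => h.2.le)).toFinset

/-- monic irreducible polynomials of degree at most `N` -/
noncomputable def Irr (F : Type*) [Field F] [Fintype F] (N : ℕ) : Finset F[X] :=
  ((finite_natDegree_le (F := F) N).subset
    (t := {f : F[X] | f.Monic ∧ Irreducible f ∧ f.natDegree ≤ N})
    (fun _ h => h.2.2)).toFinset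

@[simp] theorem mem_Mon {d : ℕ} {f : F[X]} : f ∈ Mon F d ↔ f.Monic ∧ f.natDegree = d := by
  simp [Mon]

@[simp] theorem mem_Irr {d : ℕ} {f : F[X]} :
    f ∈ Irr F d ↔ f.Monic ∧ Irreducible f ∧ f.natDegree ≤ d := by
  simp [Irr]

/-- the multiplicative weight -/
noncomputable def lam (ψ : AddChar F ℂ) (χ : MulChar F ℂ) (f : F[X]) : ℂ :=
  ψ (-f.nextCoeff) * χ ((-1) ^ f.natDegree * f.coeff 0)

variable (ψ : AddChar F ℂ) (χ : MulChar F ℂ)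

theorem lam_one : lam ψ χ 1 = 1 := by
  have : nextCoeff (1 : F[X]) = 0 := nextCoeff_C_eq_zero 1
  simp [lam, this]

theorem lam_mul {f g : F[X]} (hf : f.Monic) (hg : g.Monic) :
    lam ψ χ (f * g) = lam ψ χ f * lam ψ χ g := by
  simp only [lam, hf.nextCoeff_mul hg, hf.natDegree_mul hg, mul_coeff_zero, neg_add,
    AddChar.map_add_eq_mul, pow_add, map_mul]
  ring

theorem lam_pow {f : F[X]} (hf : f.Monic) (k : ℕ) : lam ψ χ (f ^ k) = lam ψ χ f ^ k := by
  induction k with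
  | zero => simp [lam_one]
  | succ k ih => rw [pow_succ, lam_mul ψ χ (hf.pow k) hf, ih, pow_succ]

/-- the coefficients of the L-function -/
noncomputable def L (d : ℕ) : ℂ := ∑ f ∈ Mon F d, lam ψ χ f

theorem L_zero : L ψ χ 0 = 1 := by
  have : Mon F 0 = {1} := by
    ext f
    simp only [mem_Mon, Finset.mem_singleton]
    constructor
    · rintro ⟨h1, h2⟩
      exact h1.natDegree_eq_zero.1 h2
    · rintro rfl
      simp
  simp [L, this, lam_one]

theorem L_one : L ψ χ 1 = ∑ x : F, ψ x * χ x := by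
  symm
  refine Finset.sum_bij (fun x _ => X - C x) ?_ ?_ ?_ ?_
  · intro x _
    simp [monic_X_sub_C]
  · intro x _ y _ h
    simpa using h
  · intro f hf
    rw [mem_Mon] at hf
    refine ⟨-f.coeff 0, Finset.mem_univ _, ?_⟩
    rw [hf.1.eq_X_add_C hf.2]
    simp
  · intro x _
    simp [lam]

theorem L_eq_zero (hψ : ψ ≠ 1) {d : ℕ} (hd : 2 ≤ d) : L ψ χ d = 0 := by
  obtain ⟨t, ht⟩ := AddChar.ne_one_iff.1 hψ
  have key : L ψ χ d = ψ t * L ψ χ d := by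
    conv_rhs => rw [L, Finset.mul_sum]
    have hdeg : ∀ (s : F) (f : F[X]), f.Monic → f.natDegree = d →
        (C s * X ^ (d-1)).degree < f.degree := by
      intro s f h1 h2
      rw [degree_eq_natDegree h1.ne_zero, h2]
      refine lt_of_le_of_lt (degree_C_mul_X_pow_le _ _) ?_
      exact_mod_cast (by omega)
    have hmon : ∀ (s : F) (f : F[X]), f.Monic → f.natDegree = d →
        (f + C s * X ^ (d-1)).Monic ∧ (f + C s * X ^ (d-1)).natDegree = d := by
      intro s f h1 h2
      refine ⟨h1.add_of_left (hdeg s f h1 h2), ?_⟩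
      rw [natDegree_add_eq_left_of_degree_lt (hdeg s f h1 h2), h2]
    unfold L
    symm
    refine Finset.sum_bij (fun f _ => f + C (-t) * X ^ (d-1)) ?_ ?_ ?_ ?_
    · intro f hf
      rw [mem_Mon] at hf ⊢
      exact hmon _ _ hf.1 hf.2
    · intro f _ g _ h
      simpa using h
    · intro f hf
      rw [mem_Mon] at hf
      refine ⟨f + C t * X ^ (d-1), ?_, ?_⟩
      · rw [mem_Mon]
        exact hmon _ _ hf.1 hf.2
      · simp
    · intro f hf
      rw [mem_Mon] at hf
      have h2 := (hmon (-t) f hf.1 hf.2).2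
      rw [lam, lam, nextCoeff_of_natDegree_pos (by omega), nextCoeff_of_natDegree_pos (by omega),
        h2, hf.2]
      have : ((0:ℕ) = d - 1) = False := by simp; omega
      simp only [coeff_add, coeff_C_mul, coeff_X_pow, this]
      simp [AddChar.map_add_eq_mul]
      ring
  have : (1 - ψ t) * L ψ χ d = 0 := by linear_combination key
  rcases mul_eq_zero.1 this with h | h
  · exact absurd (sub_eq_zero.1 h).symm ht
  · exact h

open UniqueFactorizationMonoid in
theorem natDegree_eq_sum {N : ℕ} {f : F[X]} (hf : f.Monic) (hN : f.natDegree ≤ N) :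
    f.natDegree = ∑ P ∈ Irr F N, ∑ k ∈ Finset.Icc 1 N,
      open scoped Classical in if P ^ k ∣ f then P.natDegree else 0 := by
  classical
  have hmon : ∀ P ∈ normalizedFactors f, P.Monic := fun P hP => by
    have h := normalize_normalized_factor P hP
    rw [← h]
    exact monic_normalize (irreducible_of_normalized_factor P hP).ne_zero
  have h1 : (normalizedFactors f).prod = f := by
    rw [prod_normalizedFactors_eq hf.ne_zero, hf.normalize_eq_self]
  have hsub : (normalizedFactors f).toFinset ⊆ Irr F N := by
    intro P hP
    rw [Multiset.mem_toFinset] at hP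
    rw [mem_Irr]
    exact ⟨hmon P hP, irreducible_of_normalized_factor P hP,
      (natDegree_le_of_dvd (dvd_of_mem_normalizedFactors hP) hf.ne_zero).trans hN⟩
  have h2 : f.natDegree = ∑ P ∈ Irr F N, (normalizedFactors f).count P * P.natDegree := by
    conv_lhs => rw [← h1, natDegree_multiset_prod_of_monic _ hmon, Finset.sum_multiset_map_count]
    rw [Finset.sum_subset hsub]
    · simp
    · intro P _ hP
      rw [Multiset.mem_toFinset] at hP
      simp [Multiset.count_eq_zero_of_notMem hP]
  rw [h2]
  refine Finset.sum_congr rfl fun P hP => ?_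
  rw [mem_Irr] at hP
  have h3 : ∀ k, P ^ k ∣ f ↔ k ≤ (normalizedFactors f).count P := by
    intro k
    rw [pow_dvd_iff_le_emultiplicity, emultiplicity_eq_count_normalizedFactors hP.2.1 hf.ne_zero,
      hP.1.normalize_eq_self, Nat.cast_le]
  have h4 : (normalizedFactors f).count P ≤ N := by
    have := natDegree_le_of_dvd ((h3 _).2 le_rfl) hf.ne_zero
    rw [hP.1.natDegree_pow] at this
    have := hP.2.1.natDegree_pos
    nlinarith
  rw [← Finset.sum_filter, Finset.sum_const, smul_eq_mul]
  congr 1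
  have : (Finset.Icc 1 N).filter (fun k => P ^ k ∣ f) =
      Finset.Icc 1 ((normalizedFactors f).count P) := by
    ext k
    simp only [Finset.mem_filter, Finset.mem_Icc, h3]
    omega
  rw [this]
  simp

theorem sum_dvd {P : F[X]} (hP : P.Monic) (d k : ℕ) :
    (∑ f ∈ Mon F d, open scoped Classical in if P ^ k ∣ f then lam ψ χ f else 0) =
      if k * P.natDegree ≤ d then lam ψ χ P ^ k * L ψ χ (d - k * P.natDegree) else 0 := by
  classical
  have hPk : (P ^ k).natDegree = k * P.natDegree := hP.natDegree_pow k
  split_ifs with h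
  · rw [← Finset.sum_filter, L, Finset.mul_sum]
    symm
    refine Finset.sum_bij (fun f _ => P ^ k * f) ?_ ?_ ?_ ?_
    · intro f hf
      rw [mem_Mon] at hf
      simp only [Finset.mem_filter, mem_Mon, dvd_mul_right, and_true]
      refine ⟨(hP.pow k).mul hf.1, ?_⟩
      rw [(hP.pow k).natDegree_mul hf.1, hPk, hf.2]
      omega
    · intro f _ g _ h
      exact mul_left_cancel₀ (hP.pow k).ne_zero h
    · intro f hf
      simp only [Finset.mem_filter, mem_Mon] at hf
      obtain ⟨⟨h1, h2⟩, g, rfl⟩ := hf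
      have hg : g.Monic := (hP.pow k).of_mul_monic_left h1
      refine ⟨g, ?_, rfl⟩
      rw [mem_Mon]
      refine ⟨hg, ?_⟩
      rw [(hP.pow k).natDegree_mul hg, hPk] at h2
      omega
    · intro f hf
      rw [mem_Mon] at hf
      rw [lam_mul ψ χ (hP.pow k) hf.1, lam_pow ψ χ hP]
  · refine Finset.sum_eq_zero fun f hf => ?_
    rw [mem_Mon] at hf
    rw [if_neg]
    intro hd
    have := natDegree_le_of_dvd hd hf.1.ne_zero
    omega

/-- power sums -/
noncomputable def A (N j : ℕ) : ℂ := ∑ P ∈ Irr F N, ∑ k ∈ Finset.Icc 1 N,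
  if k * P.natDegree = j then (P.natDegree : ℂ) * lam ψ χ P ^ k else 0

theorem main_rec {N d : ℕ} (hd : d ≤ N) :
    (d : ℂ) * L ψ χ d = ∑ P ∈ Irr F N, ∑ k ∈ Finset.Icc 1 N, (P.natDegree : ℂ) *
      if k * P.natDegree ≤ d then lam ψ χ P ^ k * L ψ χ (d - k * P.natDegree) else 0 := by
  classical
  have : (d : ℂ) * L ψ χ d = ∑ f ∈ Mon F d, ∑ P ∈ Irr F N, ∑ k ∈ Finset.Icc 1 N,
      (P.natDegree : ℂ) * if P ^ k ∣ f then lam ψ χ f else 0 := by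
    rw [L, Finset.mul_sum]
    refine Finset.sum_congr rfl fun f hf => ?_
    rw [mem_Mon] at hf
    have := natDegree_eq_sum hf.1 (hf.2.trans_le hd)
    rw [hf.2] at this
    conv_lhs => rw [this]
    push_cast
    simp only [Finset.sum_mul]
    refine Finset.sum_congr rfl fun P _ => Finset.sum_congr rfl fun k _ => ?_
    split_ifs <;> simp
  rw [this, Finset.sum_comm]
  refine Finset.sum_congr rfl fun P hP => ?_
  rw [Finset.sum_comm]
  refine Finset.sum_congr rfl fun k _ => ?_
  rw [← Finset.mul_sum, ← sum_dvd ψ χ (mem_Irr.1 hP).1]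

theorem A_one {N : ℕ} (hN : 1 ≤ N) : A ψ χ N 1 = L ψ χ 1 := by
  have := main_rec ψ χ hN
  rw [Nat.cast_one, one_mul] at this
  rw [this, A]
  refine Finset.sum_congr rfl fun P hP => Finset.sum_congr rfl fun k hk => ?_
  have h1 := (mem_Irr.1 hP).2.1.natDegree_pos
  have h2 := (Finset.mem_Icc.1 hk).1
  have h3 : 0 < k * P.natDegree := by positivity
  by_cases h : k * P.natDegree = 1
  · simp [h, L_zero]
  · rw [if_neg h, if_neg (by omega), mul_zero]

theorem A_rec (hψ : ψ ≠ 1) {N d : ℕ} (hd : 1 ≤ d) (hN : d + 1 ≤ N) :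
    A ψ χ N (d + 1) = - L ψ χ 1 * A ψ χ N d := by
  have := main_rec ψ χ hN
  rw [L_eq_zero ψ χ hψ (by omega), mul_zero] at this
  suffices h : A ψ χ N (d + 1) + L ψ χ 1 * A ψ χ N d = 0 by linear_combination h
  rw [this, A, A, Finset.mul_sum, ← Finset.sum_add_distrib]
  refine Finset.sum_congr rfl fun P hP => ?_
  rw [Finset.mul_sum, ← Finset.sum_add_distrib]
  refine Finset.sum_congr rfl fun k hk => ?_
  rcases lt_trichotomy (k * P.natDegree) d with h | h | h
  · rw [if_neg (by omega), if_neg (by omega), if_pos (by omega),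
      L_eq_zero ψ χ hψ (d := d + 1 - k * P.natDegree) (by omega)]
    ring
  · rw [if_neg (by omega), if_pos (by omega), if_pos (by omega), h,
      show d + 1 - d = 1 by omega]
    ring
  · by_cases h' : k * P.natDegree = d + 1
    · rw [if_pos h', if_neg (by omega), if_pos (by omega), h', Nat.sub_self, L_zero]
      ring
    · rw [if_neg h', if_neg (by omega), if_neg (by omega)]
      ring

theorem A_eq (hψ : ψ ≠ 1) {N d : ℕ} (hN : d + 1 ≤ N) :
    A ψ χ N (d + 1) = (-1) ^ d * L ψ χ 1 ^ (d + 1) := by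
  induction d with
  | zero => simp [A_one ψ χ hN]
  | succ d ih =>
    rw [A_rec ψ χ hψ (by omega) hN, ih (by omega)]
    ring

variable {E : Type*} [Field E] [Fintype E] [Algebra F E]

open IntermediateField in
theorem lam_minpoly (α : E) :
    ψ (Algebra.trace F E α) * χ (Algebra.norm F α) =
      lam ψ χ (minpoly F α) ^ Module.finrank F⟮α⟯ E := by
  have hi : IsIntegral F α := .of_finite F α
  have hn : Algebra.norm F (AdjoinSimple.gen F α) =
      (-1) ^ (minpoly F α).natDegree * (minpoly F α).coeff 0 := by
    simpa [minpoly_gen F α, adjoin.finrank hi] using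
      Algebra.PowerBasis.norm_gen_eq_coeff_zero_minpoly (adjoin.powerBasis hi)
  rw [lam, mul_pow, ← hn, ← map_pow χ, ← Algebra.norm_eq_norm_adjoin, trace_eq_trace_adjoin,
    trace_adjoinSimpleGen hi, AddChar.map_nsmul_eq_pow]

theorem card_minpoly {P : F[X]} (hP : P.Monic) (hI : Irreducible P)
    (hd : P.natDegree ∣ Module.finrank F E) :
    open scoped Classical in
    (Finset.univ.filter (fun α : E => minpoly F α = P)).card = P.natDegree := by
  classical
  have h1 : Finset.univ.filter (fun α : E => minpoly F α = P) = (P.aroots E).toFinset := by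
    ext α
    simp only [Finset.mem_filter, Finset.mem_univ, true_and, Multiset.mem_toFinset,
      mem_aroots]
    constructor
    · rintro rfl
      exact ⟨hI.ne_zero, minpoly.aeval _ _⟩
    · intro h
      exact (minpoly.eq_of_irreducible_of_monic hI h.2 hP).symm
  have hdv : P ∣ X ^ Fintype.card E - X := by
    rw [Module.card_eq_pow_finrank (K := F), Fintype.card_eq_nat_card]
    exact (hI.natDegree_dvd_iff_dvd_X_pow_card_pow_sub_X).1 hd
  have hs : (P.map (algebraMap F E)).Splits := by
    refine (FiniteField.isSplittingField_sub E F).splits.of_dvd ?_ (Polynomial.map_dvd (algebraMap F E) hdv)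
    exact Polynomial.map_ne_zero (FiniteField.X_pow_card_sub_X_ne_zero _ Fintype.one_lt_card)
  have hsep : P.Separable := PerfectField.separable_of_irreducible hI
  rw [h1, Multiset.toFinset_card_of_nodup (nodup_roots hsep.map),
    ← hs.natDegree_eq_card_roots, natDegree_map]

open IntermediateField in
theorem sum_eq_A {m : ℕ} (hE : Module.finrank F E = m) :
    ∑ α : E, ψ (Algebra.trace F E α) * χ (Algebra.norm F α) = A ψ χ m m := by
  classical
  have hmpos : 0 < m := hE ▸ Module.finrank_pos
  have hmul : ∀ α : E, (minpoly F α).natDegree * Module.finrank F⟮α⟯ E = m := by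
    intro α
    rw [← adjoin.finrank (IsIntegral.of_finite F α), Module.finrank_mul_finrank, hE]
  have hmaps : ∀ α ∈ (Finset.univ : Finset E), minpoly F α ∈ Irr F m := by
    intro α _
    rw [mem_Irr]
    exact ⟨minpoly.monic (.of_finite F α), minpoly.irreducible (.of_finite F α),
      Nat.le_of_dvd hmpos ⟨_, (hmul α).symm⟩⟩
  rw [← Finset.sum_fiberwise_of_maps_to hmaps, A]
  refine Finset.sum_congr rfl fun P hP => ?_
  rw [mem_Irr] at hP
  have hpos := hP.2.1.natDegree_pos
  by_cases hd : P.natDegree ∣ m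
  · obtain ⟨k, hk⟩ := hd
    have hk0 : 0 < k := Nat.pos_of_ne_zero (by rintro rfl; omega)
    have h1 : ∀ α ∈ Finset.univ.filter (fun α : E => minpoly F α = P),
        ψ (Algebra.trace F E α) * χ (Algebra.norm F α) = lam ψ χ P ^ k := by
      intro α hα
      simp only [Finset.mem_filter, Finset.mem_univ, true_and] at hα
      have := hmul α
      rw [lam_minpoly, hα]
      rw [hα, hk] at this
      rw [Nat.eq_of_mul_eq_mul_left hpos this]
    rw [Finset.sum_congr rfl h1, Finset.sum_const, card_minpoly hP.1 hP.2.1 (hE ▸ ⟨k, hk⟩),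
      Finset.sum_eq_single k]
    · rw [if_pos (by rw [hk, mul_comm]), nsmul_eq_mul]
    · intro j _ hj
      rw [if_neg]
      intro h
      apply hj
      rw [hk, mul_comm] at h
      exact Nat.eq_of_mul_eq_mul_left hpos h
    · intro h
      exfalso
      apply h
      rw [Finset.mem_Icc]
      exact ⟨hk0, Nat.le_of_dvd hmpos ⟨_, by rw [hk, mul_comm]⟩⟩
  · rw [Finset.sum_eq_zero, Finset.sum_eq_zero]
    · intro k _
      rw [if_neg]
      intro h
      exact hd ⟨k, by rw [← h, mul_comm]⟩
    · intro α hα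
      simp only [Finset.mem_filter, Finset.mem_univ, true_and] at hα
      exact absurd ⟨_, (hα ▸ hmul α).symm⟩ hd

theorem hasse_davenport (hψ : ψ ≠ 1) {n : ℕ} (hE : Module.finrank F E = n + 1) :
    ∑ α : E, ψ (Algebra.trace F E α) * χ (Algebra.norm F α) =
      (-1) ^ n * (∑ x : F, ψ x * χ x) ^ (n + 1) := by
  rw [sum_eq_A ψ χ hE, A_eq ψ χ hψ le_rfl, L_one]

theorem sum_units [DecidableEq F] {f : F → ℂ} (h0 : f 0 = 0) : ∑ x : Fˣ, f x = ∑ x : F, f x := by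
  refine Fintype.sum_of_injective (fun x : Fˣ => (x : F)) Units.val_injective _ _ ?_ ?_
  · intro x hx
    by_cases h : x = 0
    · rw [h, h0]
    · exact absurd ⟨Units.mk0 x h, rfl⟩ hx
  · intro x
    rfl

theorem gauss_shift {c : F} (hc : c ≠ 0) :
    ∑ x : F, ψ (c * x) * χ x = χ⁻¹ c * ∑ x : F, ψ x * χ x := by
  rw [Finset.mul_sum]
  refine Fintype.sum_bijective (fun x => c * x) (mulLeft_bijective₀ c hc) _ _ ?_
  intro x
  rw [MulChar.inv_apply', map_mul χ c x]
  have : χ c⁻¹ * χ c = 1 := by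
    rw [← map_mul, inv_mul_cancel₀ hc, map_one]
  linear_combination (-(ψ (c * x) * χ x)) * this

theorem hasse_davenport_shift (hψ : ψ ≠ 1) {n : ℕ} (hE : Module.finrank F E = n + 1)
    {c : F} (hc : c ≠ 0) :
    ∑ α : E, ψ (c * Algebra.trace F E α) * χ (Algebra.norm F α) =
      (-1) ^ n * (∑ x : F, ψ x * χ x) ^ (n + 1) * (χ⁻¹ ^ (n + 1)) c := by
  have h1 : AddChar.mulShift ψ c ≠ 1 := AddChar.IsPrimitive.of_ne_one hψ hc
  have := hasse_davenport (AddChar.mulShift ψ c) χ h1 hE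
  simp only [AddChar.mulShift_apply] at this
  rw [this, gauss_shift ψ χ hc, MulChar.pow_apply' _ (by omega)]
  ring

theorem inner_sum (hψ : ψ ≠ 1) {n : ℕ} (hE : Module.finrank F E = n + 1)
    {a : F} (ha : a ≠ 0) :
    ∑ c : F, ψ (-(c * a)) * ∑ α : E, ψ (c * Algebra.trace F E α) * χ (Algebra.norm F α) =
      ∑ α : E, χ (Algebra.norm F α) +
      (-1) ^ n * (∑ x : F, ψ x * χ x) ^ (n + 1) * (∑ x : F, ψ x * (χ⁻¹ ^ (n + 1)) x) *
        χ⁻¹ ((-1) ^ (n + 1) * (1 / a ^ (n + 1))) := by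
  classical
  have h1 : ∀ c : F, ψ (-(c * a)) * ∑ α : E, ψ (c * Algebra.trace F E α) * χ (Algebra.norm F α) =
      (if c = 0 then ∑ α : E, χ (Algebra.norm F α) else 0) +
      (-1) ^ n * (∑ x : F, ψ x * χ x) ^ (n + 1) * (ψ (-a * c) * (χ⁻¹ ^ (n + 1)) c) := by
    intro c
    by_cases hc : c = 0
    · subst hc
      simp [MulChar.map_zero]
    · rw [hasse_davenport_shift ψ χ hψ hE hc, if_neg hc, show -(c * a) = -a * c by ring]
      ring
  rw [Finset.sum_congr rfl fun c _ => h1 c, Finset.sum_add_distrib, ← Finset.mul_sum,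
    gauss_shift ψ _ (neg_ne_zero.2 ha)]
  rw [Finset.sum_ite_eq' Finset.univ 0, if_pos (Finset.mem_univ _)]
  have h2 : (χ⁻¹ ^ (n + 1))⁻¹ (-a) = χ⁻¹ ((-1) ^ (n + 1) * (1 / a ^ (n + 1))) := by
    rw [MulChar.inv_apply', MulChar.pow_apply' _ (by omega), ← map_pow]
    congr 1
    rw [inv_pow, neg_pow, mul_inv, one_div, ← inv_pow, inv_neg, inv_one]
  rw [h2]
  ring

theorem sum_norm_one : ∑ α : E, (1 : MulChar F ℂ) (Algebra.norm F α) = Fintype.card E - 1 := by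
  classical
  have h : ∀ α : E, (1 : MulChar F ℂ) (Algebra.norm F α) = 1 - if α = 0 then 1 else 0 := by
    intro α
    by_cases h : α = 0
    · subst h
      simp [Algebra.norm_zero, MulChar.map_zero]
    · rw [MulChar.one_apply, if_neg h, sub_zero]
      exact (Algebra.norm_ne_zero_iff.2 h).isUnit
  rw [Finset.sum_congr rfl fun α _ => h α, Finset.sum_sub_distrib]
  simp

theorem sum_norm_ne_one (hχ : χ ≠ 1) : ∑ α : E, χ (Algebra.norm F α) = 0 := by
  obtain ⟨x, hx⟩ := MulChar.ne_one_iff.1 hχ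
  obtain ⟨β, hβ⟩ := FiniteField.norm_surjective F E (x : F)
  have hβ0 : β ≠ 0 := by
    rintro rfl
    rw [Algebra.norm_zero] at hβ
    exact x.ne_zero hβ.symm
  refine eq_zero_of_mul_eq_self_left hx ?_
  rw [Finset.mul_sum]
  refine Fintype.sum_bijective (fun α => β * α) (mulLeft_bijective₀ β hβ0) _ _ ?_
  intro α
  rw [map_mul, hβ, map_mul]

theorem sum_chars [Fintype (MulChar F ℂ)] [DecidableEq F] {b : F} (hb : b ≠ 0) (x : F) :
    ∑ χ : MulChar F ℂ, χ x * χ⁻¹ b = if x = b then (Fintype.card F : ℂ) - 1 else 0 := by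
  have h : ∀ χ : MulChar F ℂ, χ x * χ⁻¹ b = χ (x * b⁻¹) := by
    intro χ
    rw [MulChar.inv_apply', map_mul]
  rw [Finset.sum_congr rfl fun χ _ => h χ]
  have hx : x = b ↔ x * b⁻¹ = 1 := by
    rw [mul_inv_eq_one₀ hb]
  simp only [hx]
  generalize x * b⁻¹ = y
  split_ifs with hy
  · subst hy
    simp only [map_one, Finset.sum_const, Finset.card_univ, nsmul_eq_mul, mul_one]
    rw [← Nat.card_eq_fintype_card, MulChar.card_eq_card_units_of_hasEnoughRootsOfUnity,
      Nat.card_eq_fintype_card, Fintype.card_units, Nat.cast_sub Fintype.card_pos, Nat.cast_one]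
  · obtain ⟨χ, hχ⟩ := MulChar.exists_apply_ne_one_of_hasEnoughRootsOfUnity F ℂ hy
    refine eq_zero_of_mul_eq_self_left hχ ?_
    simp only [Finset.mul_sum, ← MulChar.mul_apply]
    exact Fintype.sum_bijective _ (Group.mulLeft_bijective χ) _ _ fun χ' ↦ rfl

theorem count [Fintype (MulChar F ℂ)] (hψ : ψ ≠ 1) {n : ℕ} (hE : Module.finrank F E = n + 1)
    {a b : F} (ha : a ≠ 0) (hb : b ≠ 0) :
    (Fintype.card F : ℂ) * ((Fintype.card F : ℂ) - 1) *
        (Nat.card {α : E // Algebra.trace F E α = a ∧ Algebra.norm F α = b} : ℂ) =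
      (Fintype.card F : ℂ) ^ (n + 1) - 1 + (-1) ^ n * ∑ χ : MulChar F ℂ,
        (∑ x : F, ψ x * χ x) ^ (n + 1) * (∑ x : F, ψ x * (χ⁻¹ ^ (n + 1)) x) *
          χ⁻¹ ((-1) ^ (n + 1) * (b / a ^ (n + 1))) := by
  classical
  have h1 : (Fintype.card F : ℂ) * ((Fintype.card F : ℂ) - 1) *
        (Nat.card {α : E // Algebra.trace F E α = a ∧ Algebra.norm F α = b} : ℂ) =
      ∑ α : E, (∑ c : F, ψ (c * (Algebra.trace F E α - a))) *
        ∑ χ : MulChar F ℂ, χ (Algebra.norm F α) * χ⁻¹ b := by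
    rw [Nat.card_eq_fintype_card, Fintype.card_subtype, Finset.card_filter]
    push_cast
    rw [Finset.mul_sum]
    refine Finset.sum_congr rfl fun α _ => ?_
    rw [sum_chars hb, AddChar.sum_mulShift _ (AddChar.IsPrimitive.of_ne_one hψ), sub_eq_zero]
    by_cases h2 : Algebra.trace F E α = a <;> by_cases h3 : Algebra.norm F α = b <;> simp [h2, h3]
  have h2 : ∑ α : E, (∑ c : F, ψ (c * (Algebra.trace F E α - a))) *
        ∑ χ : MulChar F ℂ, χ (Algebra.norm F α) * χ⁻¹ b =
      ∑ χ : MulChar F ℂ, χ⁻¹ b * ∑ c : F, ψ (-(c * a)) *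
        ∑ α : E, ψ (c * Algebra.trace F E α) * χ (Algebra.norm F α) := by
    simp only [Finset.mul_sum, Finset.sum_mul]
    rw [Finset.sum_comm]
    refine Finset.sum_congr rfl fun χ _ => ?_
    rw [Finset.sum_comm]
    refine Finset.sum_congr rfl fun c _ => Finset.sum_congr rfl fun α _ => ?_
    rw [mul_sub, sub_eq_add_neg, AddChar.map_add_eq_mul]
    ring
  have h3 : ∑ χ : MulChar F ℂ, χ⁻¹ b * ∑ α : E, χ (Algebra.norm F α) =
      (Fintype.card F : ℂ) ^ (n + 1) - 1 := by
    rw [Finset.sum_eq_single 1]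
    · rw [sum_norm_one, inv_one, MulChar.one_apply hb.isUnit, one_mul,
        Module.card_eq_pow_finrank (K := F) (V := E), hE]
      push_cast
      rfl
    · intro χ _ hχ
      rw [sum_norm_ne_one χ hχ, mul_zero]
    · simp
  rw [h1, h2, ← h3, Finset.mul_sum, ← Finset.sum_add_distrib]
  refine Finset.sum_congr rfl fun χ _ => ?_
  rw [inner_sum ψ χ hψ hE ha,
    show (-1) ^ (n + 1) * (b / a ^ (n + 1)) = b * ((-1) ^ (n + 1) * (1 / a ^ (n + 1))) by ring,
    map_mul χ⁻¹ b]
  ring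

end HasseDav


/-- Gauss sum expression for `N_{n+1}(a,b)`: with `ψ` the canonical additive character of `𝔽_q`
and `G(χ)` the Gauss sum, for `a, b ∈ 𝔽_q^*` and `n ≥ 1`,
`q(q−1)·N_{n+1}(a,b) = q^{n+1} − 1 + (−1)^n Σ_χ G(χ)^{n+1} G(χ̄^{n+1}) χ̄((−1)^{n+1}b/a^{n+1})`. -/
theorem trace_norm_count_gauss_sum (p q n : ℕ) [Fact p.Prime] (hn : 1 ≤ n)
    (F E : Type*) [Field F] [Fintype F] [DecidableEq F] [Algebra (ZMod p) F]
    [Field E] [Fintype E] [Algebra F E]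
    (hq : Fintype.card F = q) (hE : Module.finrank F E = n + 1)
    (a b : F) (ha : a ≠ 0) (hb : b ≠ 0)
    (ψ : F → ℂ)
    (hψ : ∀ x : F, ψ x = Complex.exp (2 * Real.pi * Complex.I *
        ((Algebra.trace (ZMod p) F x).val : ℂ) / (p : ℂ)))
    (G : MulChar F ℂ → ℂ)
    (hG : ∀ χ : MulChar F ℂ, G χ = ∑ x : Fˣ, ψ x * χ x) :
    (q : ℂ) * ((q : ℂ) - 1) *
        (Nat.card {α : E // Algebra.trace F E α = a ∧ Algebra.norm F α = b} : ℂ)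
      = (q : ℂ) ^ (n + 1) - 1 +
          (-1) ^ n * ∑ᶠ χ : MulChar F ℂ,
            G χ ^ (n + 1) * G (χ⁻¹ ^ (n + 1)) * χ⁻¹ ((-1) ^ (n + 1) * (b / a ^ (n + 1))) := by
  classical
  have : Fintype (MulChar F ℂ) := Fintype.ofFinite _
  let ψ' : AddChar F ℂ := (ZMod.stdAddChar (N := p)).compAddMonoidHom
    (Algebra.trace (ZMod p) F).toAddMonoidHom
  have e1 : ∀ x, ψ x = ψ' x := by
    intro x
    rw [hψ]
    exact (ZMod.toCircle_apply (N := p) _).symm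
  have hne : ψ' ≠ 1 := by
    obtain ⟨x, hx⟩ := Algebra.trace_surjective (ZMod p) F 1
    refine AddChar.ne_one_iff.2 ⟨x, ?_⟩
    intro h
    have h' : ZMod.stdAddChar (N := p) (Algebra.trace (ZMod p) F x) = 1 := h
    rw [hx, ← (ZMod.stdAddChar (N := p)).map_zero_eq_one,
      ZMod.injective_stdAddChar.eq_iff] at h'
    exact one_ne_zero h'
  have hG' : ∀ χ : MulChar F ℂ, G χ = ∑ x : F, ψ' x * χ x := by
    intro χ
    rw [hG, ← HasseDav.sum_units (f := fun x => ψ' x * χ x) (by simp [MulChar.map_zero])]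
    exact Finset.sum_congr rfl fun x _ => by rw [e1]
  rw [finsum_eq_sum_of_fintype]
  simp only [hG']
  rw [← hq]
  exact HasseDav.count ψ' hne hE ha hb
end

section
/- Let q be a prime power, let F_q be the finite field with q elements, let n ≥ 1 be an integer, let ψ be the canonical additive character of F_q and ψ_{n+1} = ψ ∘ Tr_{F_{q^{n+1}}/F_q} the induced canonical additive character of F_{q^{n+1}}. Then for every multiplicative character χ of F_q^*, Σ_{x ∈ F_{q^{n+1}}^*} ψ_{n+1}(x)·χ(Norm_{F_{q^{n+1}}/F_q}(x)) = (−1)^n · G(χ)^{n+1}, where G(χ) = Σ_{x ∈ F_q^*} ψ(x)χ(x) is the Gauss sum over F_q (the Davenport–Hasse identity). -/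
namespace DH
open Polynomial

section
variable {F : Type*} [Field F]

/-- The multiplicative weight of a monic polynomial. -/
noncomputable def lam (ψ : AddChar F ℂ) (χ : MulChar F ℂ) (f : F[X]) : ℂ :=
  ψ (-f.nextCoeff) * χ ((-1) ^ f.natDegree * f.coeff 0)

lemma lam_one (ψ : AddChar F ℂ) (χ : MulChar F ℂ) : lam ψ χ 1 = 1 := by
  have : (1 : F[X]).nextCoeff = 0 := by
    rw [← C_1, nextCoeff_C_eq_zero]
  simp [lam, this]

lemma lam_mul (ψ : AddChar F ℂ) (χ : MulChar F ℂ) {f g : F[X]} (hf : f.Monic) (hg : g.Monic) :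
    lam ψ χ (f * g) = lam ψ χ f * lam ψ χ g := by
  unfold lam
  rw [hf.nextCoeff_mul hg, hf.natDegree_mul hg, mul_coeff_zero, neg_add, AddChar.map_add_eq_mul,
    pow_add, mul_mul_mul_comm, map_mul χ]
  ring

lemma lam_pow (ψ : AddChar F ℂ) (χ : MulChar F ℂ) {f : F[X]} (hf : f.Monic) (k : ℕ) :
    lam ψ χ (f ^ k) = lam ψ χ f ^ k := by
  induction k with
  | zero => simp [lam_one]
  | succ k ih => rw [pow_succ, lam_mul ψ χ (hf.pow k) hf, ih, pow_succ]

lemma finite_monic [Finite F] (m : ℕ) : {f : F[X] | f.Monic ∧ f.natDegree ≤ m}.Finite := by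
  refine Set.Finite.of_finite_image (f := fun f : F[X] => fun i : Fin (m + 1) => f.coeff i)
    (Set.toFinite _) ?_
  intro f hf g hg h
  ext i
  by_cases hi : i < m + 1
  · exact congrFun h ⟨i, hi⟩
  · rw [coeff_eq_zero_of_natDegree_lt (by have := hf.2; omega),
      coeff_eq_zero_of_natDegree_lt (by have := hg.2; omega)]

/-- Monic polynomials of degree `m`. -/
noncomputable def M (F : Type*) [Field F] [Finite F] (m : ℕ) : Finset F[X] :=
  ((finite_monic (F := F) m).subset
    (t := {f : F[X] | f.Monic ∧ f.natDegree = m}) (fun _ h => ⟨h.1, h.2.le⟩)).toFinset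

/-- Monic irreducible polynomials of degree at most `m`. -/
noncomputable def I (F : Type*) [Field F] [Finite F] (m : ℕ) : Finset F[X] :=
  ((finite_monic (F := F) m).subset
    (t := {f : F[X] | f.Monic ∧ Irreducible f ∧ f.natDegree ≤ m})
      (fun _ h => ⟨h.1, h.2.2⟩)).toFinset

variable [Finite F]

lemma mem_M {m : ℕ} {f : F[X]} : f ∈ M F m ↔ f.Monic ∧ f.natDegree = m := by simp [M]
lemma mem_I {m : ℕ} {f : F[X]} : f ∈ I F m ↔ f.Monic ∧ Irreducible f ∧ f.natDegree ≤ m := by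
  simp [I]

/-- Sum of weights in degree `m`. -/
noncomputable def A (ψ : AddChar F ℂ) (χ : MulChar F ℂ) (m : ℕ) : ℂ := ∑ f ∈ M F m, lam ψ χ f

lemma A_zero (ψ : AddChar F ℂ) (χ : MulChar F ℂ) : A ψ χ 0 = 1 := by
  have : M F 0 = {1} := by
    ext f
    rw [mem_M, Finset.mem_singleton]
    constructor
    · rintro ⟨h1, h2⟩; exact h1.natDegree_eq_zero.mp h2
    · rintro rfl; simp [monic_one]
  rw [A, this, Finset.sum_singleton, lam_one]

lemma A_one [Fintype F] (ψ : AddChar F ℂ) (χ : MulChar F ℂ) :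
    A ψ χ 1 = ∑ a : F, ψ a * χ a := by
  symm
  unfold A
  refine Finset.sum_bij (fun a _ => X - C a) ?_ ?_ ?_ ?_
  · intro a _; rw [mem_M]; exact ⟨monic_X_sub_C a, natDegree_X_sub_C a⟩
  · intro a _ b _ h; simpa using h
  · intro f hf
    rw [mem_M] at hf
    refine ⟨-f.coeff 0, Finset.mem_univ _, ?_⟩
    have := hf.1.as_sum
    rw [hf.2] at this
    rw [this]; simp
  · intro a _
    simp [lam, nextCoeff_X_sub_C]

lemma A_big (ψ : AddChar F ℂ) (hψ : ∃ a, ψ a ≠ 1) (χ : MulChar F ℂ) {m : ℕ} (hm : 2 ≤ m) :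
    A ψ χ m = 0 := by
  obtain ⟨a, ha⟩ := hψ
  have key : ∀ (b : F) (f : F[X]), f ∈ M F m → f + C b * X ^ (m - 1) ∈ M F m := by
    intro b f hf
    rw [mem_M] at hf ⊢
    have hd : (C b * X ^ (m - 1)).degree < f.degree := by
      rw [degree_eq_natDegree hf.1.ne_zero, hf.2]
      exact (degree_C_mul_X_pow_le _ _).trans_lt (by exact_mod_cast (by omega))
    exact ⟨hf.1.add_of_left hd, by rw [natDegree_add_eq_left_of_degree_lt hd, hf.2]⟩
  have h : A ψ χ m = ψ a * A ψ χ m := by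
    rw [A, Finset.mul_sum]
    symm
    refine Finset.sum_bij' (fun f _ => f + C (-a) * X ^ (m - 1)) (fun f _ => f + C a * X ^ (m - 1))
      (fun f hf => key _ f hf) (fun f hf => key _ f hf) ?_ ?_ ?_
    · intro f _; simp
    · intro f _; simp
    · intro f hf
      have h2 := key (-a) f hf
      rw [mem_M] at hf h2
      unfold lam
      rw [nextCoeff_of_natDegree_pos (by omega), nextCoeff_of_natDegree_pos (by omega), h2.2, hf.2]
      have h0 : (0 : ℕ) ≠ m - 1 := by omega
      simp only [coeff_add, coeff_C_mul, coeff_X_pow, if_true, if_neg h0]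
      simp [AddChar.map_add_eq_mul]
      ring
  have : (1 - ψ a) * A ψ χ m = 0 := by linear_combination h
  rcases mul_eq_zero.mp this with h | h
  · exact absurd (by linear_combination -h) ha
  · exact h

open Classical in
lemma natDegree_eq {m N : ℕ} (hm : m ≤ N) {f : F[X]} (hf : f ∈ M F m) :
    m = ∑ P ∈ I F N, ∑ k ∈ Finset.Icc 1 N, if P ^ k ∣ f then P.natDegree else 0 := by
  rw [mem_M] at hf
  obtain ⟨hmon, hdeg⟩ := hf
  have hne := hmon.ne_zero
  have hprod : (UniqueFactorizationMonoid.normalizedFactors f).prod = f := by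
    rw [UniqueFactorizationMonoid.prod_normalizedFactors_eq hne, hmon.normalize_eq_self]
  have h0 : (0 : F[X]) ∉ UniqueFactorizationMonoid.normalizedFactors f :=
    UniqueFactorizationMonoid.zero_notMem_normalizedFactors f
  have h1 : m = ((UniqueFactorizationMonoid.normalizedFactors f).map natDegree).sum := by
    rw [← natDegree_multiset_prod _ h0, hprod, hdeg]
  rw [h1, Finset.sum_multiset_map_count]
  have hsub : (UniqueFactorizationMonoid.normalizedFactors f).toFinset ⊆ I F N := by
    intro P hP
    rw [Multiset.mem_toFinset] at hP
    have hirr := UniqueFactorizationMonoid.irreducible_of_normalized_factor P hP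
    rw [mem_I]
    refine ⟨?_, hirr, ?_⟩
    · have := UniqueFactorizationMonoid.normalize_normalized_factor P hP
      rw [← this]
      exact monic_normalize hirr.ne_zero
    · have := natDegree_le_of_dvd (UniqueFactorizationMonoid.dvd_of_mem_normalizedFactors hP) hne
      omega
  rw [Finset.sum_subset hsub]
  · refine Finset.sum_congr rfl fun P hP => ?_
    rw [mem_I] at hP
    have hiff : ∀ k : ℕ, P ^ k ∣ f ↔
        k ≤ (UniqueFactorizationMonoid.normalizedFactors f).count P := by
      intro k
      rw [pow_dvd_iff_le_emultiplicity,
        UniqueFactorizationMonoid.emultiplicity_eq_count_normalizedFactors hP.2.1 hne,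
        hP.1.normalize_eq_self]
      exact_mod_cast Iff.rfl
    set c := (UniqueFactorizationMonoid.normalizedFactors f).count P with hc
    have hcN : c ≤ N := by
      have := natDegree_le_of_dvd ((hiff c).2 le_rfl) hne
      rw [natDegree_pow, hdeg] at this
      have := hP.2.1.natDegree_pos
      nlinarith
    simp_rw [hiff]
    rw [← Finset.sum_filter, Finset.sum_const]
    congr 1
    have : Finset.filter (fun k => k ≤ c) (Finset.Icc 1 N) = Finset.Icc 1 c := by
      ext k; simp; omega
    rw [this]; simp
  · intro P _ hP
    rw [Multiset.mem_toFinset] at hP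
    rw [Multiset.count_eq_zero_of_notMem hP, zero_smul]

open Classical in
lemma sum_dvd (ψ : AddChar F ℂ) (χ : MulChar F ℂ) {g : F[X]} (hg : g.Monic) (m : ℕ) :
    ∑ f ∈ M F m, (if g ∣ f then lam ψ χ f else 0) =
      if g.natDegree ≤ m then lam ψ χ g * A ψ χ (m - g.natDegree) else 0 := by
  split_ifs with h
  · rw [← Finset.sum_filter, A, Finset.mul_sum]
    symm
    refine Finset.sum_bij (fun f _ => g * f) ?_ ?_ ?_ ?_
    · intro f hf
      rw [mem_M] at hf
      rw [Finset.mem_filter, mem_M]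
      exact ⟨⟨hg.mul hf.1, by rw [hg.natDegree_mul hf.1]; omega⟩, dvd_mul_right _ _⟩
    · intro a _ b _ hab
      exact mul_left_cancel₀ hg.ne_zero hab
    · intro f hf
      rw [Finset.mem_filter, mem_M] at hf
      obtain ⟨⟨h1, h2⟩, r, rfl⟩ := hf
      have hr := hg.of_mul_monic_left h1
      rw [hg.natDegree_mul hr] at h2
      exact ⟨r, mem_M.2 ⟨hr, by omega⟩, rfl⟩
    · intro f hf
      rw [mem_M] at hf
      rw [lam_mul ψ χ hg hf.1]
  · refine Finset.sum_eq_zero fun f hf => if_neg fun hd => h ?_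
    rw [mem_M] at hf
    rw [← hf.2]
    exact natDegree_le_of_dvd hd hf.1.ne_zero

/-- Power sums. -/
noncomputable def S (ψ : AddChar F ℂ) (χ : MulChar F ℂ) (N j : ℕ) : ℂ :=
  ∑ P ∈ I F N, ∑ k ∈ Finset.Icc 1 N,
    if k * P.natDegree = j then (P.natDegree : ℂ) * lam ψ χ P ^ k else 0

lemma newton (ψ : AddChar F ℂ) (hψ : ∃ a, ψ a ≠ 1) (χ : MulChar F ℂ) {m N : ℕ}
    (hm1 : 1 ≤ m) (hm : m ≤ N) :
    (m : ℂ) * A ψ χ m = S ψ χ N m + A ψ χ 1 * if 2 ≤ m then S ψ χ N (m - 1) else 0 := by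
  classical
  have h1 : (m : ℂ) * A ψ χ m = ∑ P ∈ I F N, ∑ k ∈ Finset.Icc 1 N, ∑ f ∈ M F m,
      (P.natDegree : ℂ) * (if P ^ k ∣ f then lam ψ χ f else 0) := by
    rw [A, Finset.mul_sum]
    have : ∀ f ∈ M F m, (m : ℂ) * lam ψ χ f = ∑ P ∈ I F N, ∑ k ∈ Finset.Icc 1 N,
        (P.natDegree : ℂ) * (if P ^ k ∣ f then lam ψ χ f else 0) := by
      intro f hf
      have := congrArg (Nat.cast : ℕ → ℂ) (natDegree_eq hm hf)
      rw [this]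
      push_cast
      rw [Finset.sum_mul]
      refine Finset.sum_congr rfl fun P _ => ?_
      rw [Finset.sum_mul]
      refine Finset.sum_congr rfl fun k _ => ?_
      split_ifs <;> simp
    rw [Finset.sum_congr rfl this, Finset.sum_comm]
    refine Finset.sum_congr rfl fun P _ => ?_
    rw [Finset.sum_comm]
  rw [h1]
  have h2 : (A ψ χ 1 * if 2 ≤ m then S ψ χ N (m - 1) else 0) =
     ∑ P ∈ I F N, ∑ k ∈ Finset.Icc 1 N,
      A ψ χ 1 * if 2 ≤ m then (if k * P.natDegree = m - 1 then
        (P.natDegree : ℂ) * lam ψ χ P ^ k else 0) else 0 := by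
    split_ifs
    · simp only [S, Finset.mul_sum]
    · simp
  rw [h2, S, ← Finset.sum_add_distrib]
  refine Finset.sum_congr rfl fun P hP => ?_
  rw [← Finset.sum_add_distrib]
  refine Finset.sum_congr rfl fun k hk => ?_
  rw [mem_I] at hP
  rw [Finset.mem_Icc] at hk
  rw [← Finset.mul_sum, sum_dvd ψ χ (hP.1.pow k), lam_pow ψ χ hP.1, natDegree_pow]
  have hpos : 0 < k * P.natDegree := Nat.mul_pos hk.1 hP.2.1.natDegree_pos
  generalize k * P.natDegree = e at *
  rcases lt_trichotomy e m with h | h | h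
  · by_cases he : e = m - 1
    · have h3 : m - e = 1 := by omega
      rw [if_pos h.le, if_neg h.ne, if_pos (by omega), if_pos he, h3]; ring
    · rw [if_pos h.le, if_neg h.ne, if_neg he, A_big ψ hψ χ (by omega)]; simp
  · subst h
    rw [if_pos le_rfl, if_pos rfl, Nat.sub_self, A_zero, if_neg (by omega : ¬ e = e - 1)]; simp
  · rw [if_neg (by omega), if_neg (by omega), if_neg (by omega : ¬ e = m - 1)]; simp

lemma S_eq (ψ : AddChar F ℂ) (hψ : ∃ a, ψ a ≠ 1) (χ : MulChar F ℂ) {N : ℕ} (n : ℕ)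
    (hm : n + 1 ≤ N) : S ψ χ N (n + 1) = (-1) ^ n * A ψ χ 1 ^ (n + 1) := by
  induction n with
  | zero =>
    have := newton ψ hψ χ (m := 1) le_rfl hm
    simp at this ⊢
    exact this.symm
  | succ n ih =>
    have := newton ψ hψ χ (m := n + 1 + 1) (by omega) hm
    rw [A_big ψ hψ χ (by omega), if_pos (by omega), Nat.add_sub_cancel, ih (by omega)] at this
    rw [pow_succ (-1 : ℂ), pow_succ (A ψ χ 1) (n + 1)]
    linear_combination -this

lemma term_eq {E : Type*} [Field E] [Algebra F E] [FiniteDimensional F E]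
    (ψ : AddChar F ℂ) (χ : MulChar F ℂ) (x : E) :
    ψ (Algebra.trace F E x) * χ (Algebra.norm F x) =
      lam ψ χ (minpoly F x) ^ (Module.finrank F E / (minpoly F x).natDegree) := by
  have hx : IsIntegral F x := .of_finite F x
  have hk : Module.finrank (IntermediateField.adjoin F {x}) E =
      Module.finrank F E / (minpoly F x).natDegree := by
    rw [← IntermediateField.adjoin.finrank hx,
      ← Module.finrank_mul_finrank F (IntermediateField.adjoin F {x}) E]
    exact (Nat.mul_div_cancel_left _ Module.finrank_pos).symm
  have hnorm : Algebra.norm F (IntermediateField.AdjoinSimple.gen F x) =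
      (-1) ^ (minpoly F x).natDegree * (minpoly F x).coeff 0 := by
    simpa [IntermediateField.minpoly_gen F x] using
      Algebra.PowerBasis.norm_gen_eq_coeff_zero_minpoly (IntermediateField.adjoin.powerBasis hx)
  rw [trace_eq_trace_adjoin, trace_adjoinSimpleGen hx, Algebra.norm_eq_norm_adjoin, hk, hnorm,
    AddChar.map_nsmul_eq_pow, map_pow, ← mul_pow]
  rfl

lemma card_fiber {E : Type*} [Field E] [Fintype E] [Algebra F E] [DecidableEq F[X]]
    {P : F[X]} (hP : P.Monic) (hirr : Irreducible P) (hd : P.natDegree ∣ Module.finrank F E) :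
    (Finset.univ.filter fun x : E => minpoly F x = P).card = P.natDegree := by
  classical
  have := Fintype.ofFinite F
  have hsep : P.Separable := PerfectField.separable_of_irreducible hirr
  have hdvd := hirr.natDegree_dvd_iff_dvd_X_pow_card_pow_sub_X.1 hd
  rw [← Module.natCard_eq_pow_finrank (K := F) (V := E)] at hdvd
  have hspl : Splits (P.map (algebraMap F E)) := by
    have h2 := Polynomial.map_dvd (algebraMap F E) hdvd
    simp only [Polynomial.map_sub, Polynomial.map_pow, map_X] at h2
    refine Splits.of_dvd ?_ ?_ h2
    · have := (FiniteField.isSplittingField_sub E F).splits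
      simpa [Nat.card_eq_fintype_card] using this
    · rw [Nat.card_eq_fintype_card]
      exact FiniteField.X_pow_card_sub_X_ne_zero E Fintype.one_lt_card
  rw [← card_rootSet_eq_natDegree hsep hspl, ← Set.toFinset_card]
  congr 1
  ext x
  simp only [Finset.mem_filter, Finset.mem_univ, true_and, Set.mem_toFinset, mem_rootSet]
  constructor
  · rintro rfl; exact ⟨hP.ne_zero, minpoly.aeval F x⟩
  · rintro ⟨_, h⟩; exact (minpoly.eq_of_irreducible_of_monic hirr h hP).symm

lemma sum_eq_S {E : Type*} [Field E] [Fintype E] [Algebra F E]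
    (ψ : AddChar F ℂ) (χ : MulChar F ℂ) :
    ∑ x : E, ψ (Algebra.trace F E x) * χ (Algebra.norm F x) =
      S ψ χ (Module.finrank F E) (Module.finrank F E) := by
  classical
  set d := Module.finrank F E with hd
  have hdpos : 0 < d := Module.finrank_pos
  have hmaps : ∀ x ∈ (Finset.univ : Finset E), minpoly F x ∈ I F d := by
    intro x _
    have hx : IsIntegral F x := .of_finite F x
    rw [mem_I]
    exact ⟨minpoly.monic hx, minpoly.irreducible hx, minpoly.natDegree_le x⟩
  rw [← Finset.sum_fiberwise_of_maps_to hmaps, S]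
  refine Finset.sum_congr rfl fun P hP => ?_
  rw [mem_I] at hP
  have h1 : ∑ x ∈ Finset.univ.filter (fun x : E => minpoly F x = P),
      ψ (Algebra.trace F E x) * χ (Algebra.norm F x) =
      ((Finset.univ.filter fun x : E => minpoly F x = P).card : ℂ) *
        lam ψ χ P ^ (d / P.natDegree) := by
    rw [← nsmul_eq_mul, ← Finset.sum_const]
    refine Finset.sum_congr rfl fun x hx => ?_
    rw [Finset.mem_filter] at hx
    rw [term_eq, hx.2]
  rw [h1]
  have hpos := hP.2.1.natDegree_pos
  by_cases hdv : P.natDegree ∣ d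
  · rw [card_fiber hP.1 hP.2.1 hdv, Finset.sum_eq_single (d / P.natDegree)]
    · rw [if_pos (Nat.div_mul_cancel hdv)]
    · intro k _ hk
      refine if_neg fun h => hk ?_
      rw [← h, Nat.mul_div_cancel _ hpos]
    · intro h
      exfalso; apply h
      rw [Finset.mem_Icc]
      exact ⟨Nat.div_pos hP.2.2 hpos, Nat.div_le_self _ _⟩
  · have : (Finset.univ.filter fun x : E => minpoly F x = P) = ∅ := by
      rw [Finset.filter_eq_empty_iff]
      rintro x - rfl
      exact hdv (minpoly.degree_dvd (.of_finite F x))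
    rw [this, Finset.sum_eq_zero]
    · simp
    · intro k _
      exact if_neg fun h => hdv ⟨k, by rw [← h, mul_comm]⟩

end

lemma sum_units {R : Type*} [Field R] [Fintype R] [DecidableEq R] (g : R → ℂ) (h : g 0 = 0) :
    ∑ x : Rˣ, g x = ∑ x : R, g x := by
  have h2 : ∑ x : Rˣ, g x = ∑ x ∈ Finset.univ.image (fun u : Rˣ => (u : R)), g x := by
    rw [Finset.sum_image]
    intro a _ b _ hab
    exact Units.ext hab
  rw [h2]
  refine Finset.sum_subset (Finset.subset_univ _) fun x _ hx => ?_
  by_contra hne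
  apply hx
  have hx0 : x ≠ 0 := fun h0 => hne (by rw [h0, h])
  exact Finset.mem_image.2 ⟨Units.mk0 x hx0, Finset.mem_univ _, rfl⟩

end DH


/-- **Davenport–Hasse identity**: with `ψ` the canonical additive character of `𝔽_q` and
`ψ_{n+1} = ψ ∘ Tr` the induced canonical additive character of `𝔽_{q^{n+1}}`, for every
multiplicative character `χ` of `𝔽_q^*`,
`Σ_{x ∈ 𝔽_{q^{n+1}}^*} ψ_{n+1}(x) χ(Norm(x)) = (−1)^n G(χ)^{n+1}`. -/
theorem davenport_hasse (p q n : ℕ) [Fact p.Prime] (hn : 1 ≤ n)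
    (F E : Type*) [Field F] [Fintype F] [DecidableEq F] [Algebra (ZMod p) F]
    [Field E] [Fintype E] [DecidableEq E] [Algebra F E]
    (hq : Fintype.card F = q) (hE : Module.finrank F E = n + 1)
    (ψ : F → ℂ)
    (hψ : ∀ x : F, ψ x = Complex.exp (2 * Real.pi * Complex.I *
        ((Algebra.trace (ZMod p) F x).val : ℂ) / (p : ℂ)))
    (G : MulChar F ℂ → ℂ)
    (hG : ∀ χ : MulChar F ℂ, G χ = ∑ x : Fˣ, ψ x * χ x) :
    ∀ χ : MulChar F ℂ,
      ∑ x : Eˣ, ψ (Algebra.trace F E x) * χ (Algebra.norm F (x : E))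
        = (-1) ^ n * G χ ^ (n + 1) := by
  intro χ
  let Ψ : AddChar F ℂ := (ZMod.stdAddChar (N := p)).compAddMonoidHom
    (Algebra.trace (ZMod p) F).toAddMonoidHom
  have hΨ : ∀ x, ψ x = Ψ x := by
    intro x
    have h := ZMod.stdAddChar_coe (N := p) ((Algebra.trace (ZMod p) F x).val : ℤ)
    have h2 : Ψ x = ZMod.stdAddChar (Algebra.trace (ZMod p) F x) := rfl
    rw [hψ, h2]
    rw [Int.cast_natCast, ZMod.natCast_zmod_val] at h
    rw [h]
    simp
  have hnt : ∃ a, Ψ a ≠ 1 := by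
    have : Module.Finite (ZMod p) F := Module.Finite.of_finite
    obtain ⟨a, ha⟩ := Algebra.trace_surjective (ZMod p) F 1
    refine ⟨a, fun h => ?_⟩
    have h2 : Ψ a = ZMod.stdAddChar (Algebra.trace (ZMod p) F a) := rfl
    rw [h2, ha, ← (ZMod.stdAddChar (N := p)).map_zero_eq_one] at h
    exact one_ne_zero (ZMod.injective_stdAddChar h)
  have hfin : Module.Finite F E := Module.Finite.of_finite
  have h1 : G χ = DH.A Ψ χ 1 := by
    rw [hG, DH.A_one, ← DH.sum_units (fun x : F => Ψ x * χ x) (by simp [χ.map_nonunit not_isUnit_zero])]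
    exact Finset.sum_congr rfl fun x _ => by rw [hΨ]
  have h2 := DH.sum_eq_S (E := E) Ψ χ
  rw [hE, DH.S_eq Ψ hnt χ n le_rfl, ← h1] at h2
  rw [← h2, ← DH.sum_units (fun x : E => Ψ (Algebra.trace F E x) * χ (Algebra.norm F x))
    (by simp [Algebra.norm_zero, χ.map_nonunit not_isUnit_zero])]
  exact Finset.sum_congr rfl fun x _ => by rw [hΨ]
end
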